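/- Let δ > 0, λ > 0. There exist constants K > 0 and C₂ > 0, depending only on δ and λ, such that for every Schwartz function h on ℝ³ and every nonnegative Schwartz function g on ℝ³ with ‖g‖_{L¹} > δ and ‖g‖_{L¹₂} + ∫_{ℝ³} g log(1+g) dv < λ, one has ⟨Q(g,h), h⟩ ≤ −K ‖∇h‖²_{L²_{−3/2}} + C₂ (1 + ‖g‖⁴_{L²₃}) ‖h‖²_{L²_{−3/2}}. -/

import Mathlib

/-!
Write `A = a * g` for the diffusion matrix. Integrating by parts once,
`⟨Q(g,h), h⟩ = -∫ A∇h·∇h + Σ_ij ∫ (a_ij * ∂_j g) h ∂_i h` (`pairL_eq`). The estimate results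
from three facts.

* *Drift.* Since `a_ij = ∂_i∂_j |z|`, the sum `Σ_ij ∂_i∂_j a_ij = Δ²|z|` is a negative multiple
  of the Dirac mass, and as `h ∂_i h = ∂_i (h²)/2` the second term is a positive constant times
  `∫ g h²` (`pairL_eq'`). The identity is obtained from the regularised kernels
  `∂_i∂_j √(|z|² + e²)`, for which both integrations by parts are classical (`drift_reg`) and whose
  bi-Laplacian is a multiple of an approximate identity; then `e → 0` (`drift_eq`).
* *Diffusion.* `A(w)ξ·ξ ≥ K ⟨w⟩⁻³ |ξ|²` (`coercive`). Fix a unit vector `b ⊥ ξ`; then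
  `a(z)ξ·ξ ≥ |z|⁻³ (b·z)² |ξ|²`, so only the mass of `g` in a thin slab orthogonal to `b` is lost.
  The second moment confines mass to a ball, and the bound on `∫ g log(1+g)` forbids
  concentration on a set of small measure, so a mass at least `δ/2` remains off the slab.
* *Absorption.* For every `ε > 0`,
  `∫ g h² ≤ ε ‖∇h‖²_{L²_{-3/2}} + C (ε + ε⁻³ ‖g‖⁴_{L²₃}) ‖h‖²_{L²_{-3/2}}` (`sobolev`): write
  `g h² = (⟨v⟩³ g) (⟨v⟩^{-3/2} h)²` and use Cauchy–Schwarz, interpolation of `L⁴` between `L²`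
  and `L⁶`, the Sobolev inequality in dimension three and the Young inequality (`interp`).
  Taking `ε` small compared with `K` lets the diffusion absorb the gradient term.
-/

open MeasureTheory Real Finset

noncomputable section

abbrev E3 := EuclideanSpace ℝ (Fin 3)

/-- The Japanese bracket `⟨v⟩ = √(1+|v|²)`. -/
def jap (v : E3) : ℝ := Real.sqrt (1 + ‖v‖ ^ 2)

/-- The projection matrix `Π(z)` with entries `δ_ij − z_i z_j / |z|²`. -/
def Pi3 (z : E3) : Matrix (Fin 3) (Fin 3) ℝ :=
  Matrix.of fun i j => (if i = j then (1 : ℝ) else 0) - z i * z j / ‖z‖ ^ 2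

/-- The Coulomb Landau kernel `a(z) = |z|⁻¹ Π(z)`. -/
def aK (z : E3) : Matrix (Fin 3) (Fin 3) ℝ :=
  Matrix.of fun i j => ‖z‖⁻¹ * Pi3 z i j

/-- Partial derivative `∂_i f`. -/
def pd (i : Fin 3) (f : E3 → ℝ) : E3 → ℝ :=
  fun v => fderiv ℝ f v (EuclideanSpace.single i 1)

/-- The Landau collision operator with Coulomb potential:
`Q(g,h)(v) = ∇_v · ∫ a(v−v*) ( g(v*) ∇h(v) − ∇g(v*) h(v) ) dv*`. -/
def landauQ (g h : E3 → ℝ) : E3 → ℝ := fun v =>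
  ∑ i : Fin 3, fderiv ℝ (fun w =>
      ∫ vs : E3, ∑ j : Fin 3, aK (w - vs) i j * (g vs * pd j h w - pd j g vs * h w)) v
    (EuclideanSpace.single i 1)

/-- The pairing `⟨f,g⟩ = ∫ f g dv`. -/
def pairL (f g : E3 → ℝ) : ℝ := ∫ v : E3, f v * g v

/-- Weighted Lebesgue norm `‖f‖_{L^p_l} = (∫ |f|^p ⟨v⟩^{lp})^{1/p}`. -/
def Lpl (p l : ℝ) (f : E3 → ℝ) : ℝ :=
  (∫ v : E3, |f v| ^ p * jap v ^ (l * p)) ^ (1 / p)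

/-- Iterated partial derivative in direction `i`. -/
def pdPow (i : Fin 3) : ℕ → (E3 → ℝ) → E3 → ℝ
  | 0, f => f
  | n + 1, f => pd i (pdPow i n f)

/-- Multi-index partial derivative `∂^m f`. -/
def pdM (m : Fin 3 → ℕ) (f : E3 → ℝ) : E3 → ℝ :=
  pdPow 0 (m 0) (pdPow 1 (m 1) (pdPow 2 (m 2) f))

/-- Multi-indices `m` with `|m| ≤ n`. -/
def multiIdx (n : ℕ) : Finset (Fin 3 → ℕ) :=
  (Fintype.piFinset fun _ : Fin 3 => Finset.range (n + 1)).filter fun m => (∑ i, m i) ≤ n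

/-- Square of the weighted Sobolev norm `‖f‖²_{H^n_l} = Σ_{|m|≤n} ‖∂^m f‖²_{L²_l}`. -/
def HSobSq (n : ℕ) (l : ℝ) (f : E3 → ℝ) : ℝ :=
  ∑ m ∈ multiIdx n, (Lpl 2 l (pdM m f)) ^ 2

/-- Weighted Sobolev norm `‖f‖_{H^n_l}`. -/
def HSob (n : ℕ) (l : ℝ) (f : E3 → ℝ) : ℝ :=
  Real.sqrt (HSobSq n l f)

/-- Rotational derivative `(v_i ∂_j − v_j ∂_i) f`. -/
def rotD (i j : Fin 3) (f : E3 → ℝ) : E3 → ℝ :=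
  fun v => v i * pd j f v - v j * pd i f v

/-- Square of the anisotropic norm
`‖f‖²_{𝖧¹_A} = Σ_{i<j} ‖(v_i ∂_j − v_j ∂_i) f‖²_{L²_{−3/2}} + ‖f‖²_{H¹_{−3/2}}`. -/
def HAsq (f : E3 → ℝ) : ℝ :=
  (∑ p ∈ Finset.univ.filter (fun p : Fin 3 × Fin 3 => p.1 < p.2),
    (Lpl 2 (-(3/2)) (rotD p.1 p.2 f)) ^ 2) + HSobSq 1 (-(3/2)) f

/-- The anisotropic norm `‖f‖_{𝖧¹_A}`. -/
def HA (f : E3 → ℝ) : ℝ := Real.sqrt (HAsq f)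

end

/-! ### Convolution of Schwartz functions with kernels bounded by `|z|⁻¹` -/

section
open Filter Topology SchwartzMap Metric
open scoped LineDeriv

/-- The partial derivative `∂_i f` as a Schwartz function. -/
noncomputable def pdS (i : Fin 3) (f : 𝓢(E3, ℝ)) : 𝓢(E3, ℝ) :=
  ∂_{(EuclideanSpace.single i 1 : E3)} f

lemma pdS_coe (i : Fin 3) (f : 𝓢(E3, ℝ)) : ⇑(pdS i f) = pd i ⇑f := by
  ext x
  simp [pdS, pd, SchwartzMap.lineDerivOp_apply_eq_fderiv]

lemma schwartz_decay {F : Type*} [NormedAddCommGroup F] [NormedSpace ℝ F] (k : ℕ) (f : 𝓢(E3, F)) :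
    ∃ C, 0 ≤ C ∧ ∀ x, ‖f x‖ ≤ C * ((1 + ‖x‖) ^ k)⁻¹ := by
  refine ⟨2 ^ k * (Finset.Iic (k, 0)).sup (fun m => SchwartzMap.seminorm ℝ m.1 m.2) f,
    by positivity, fun x => ?_⟩
  have h := SchwartzMap.one_add_le_sup_seminorm_apply (𝕜 := ℝ) (m := (k, 0)) (k := k) (n := 0)
    le_rfl le_rfl f x
  rw [norm_iteratedFDeriv_zero] at h
  rw [← div_eq_mul_inv, le_div_iff₀ (by positivity), mul_comm]
  exact h

lemma integrable_inv_one_add_norm : Integrable (fun z : E3 => ((1 + ‖z‖) ^ 4)⁻¹) := by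
  have h := integrable_one_add_norm (E := E3) (μ := volume) (r := 4) (by simp; norm_num)
  refine h.congr (Eventually.of_forall fun x => ?_)
  have : (0:ℝ) ≤ 1 + ‖x‖ := by positivity
  simp only
  rw [Real.rpow_neg this]
  norm_cast

lemma integrableOn_norm_inv_ball :
    Integrable ((ball (0 : E3) 1).indicator fun z => ‖z‖⁻¹) := by
  rw [integrable_indicator_iff measurableSet_ball]
  have := (integrableOn_fun_norm_addHaar (volume : Measure E3) (f := fun y : ℝ => y⁻¹) (r := 1)).2
  apply this
  have h2 : IntegrableOn (fun y : ℝ => y) (Set.Ioo 0 1) :=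
    (continuous_id.integrableOn_Icc).mono_set Set.Ioo_subset_Icc_self
  refine h2.congr_fun ?_ measurableSet_Ioo
  intro y hy
  have : y ≠ 0 := hy.1.ne'
  simp
  field_simp

lemma norm_inv_le (z : E3) : ‖z‖⁻¹ ≤ (ball (0 : E3) 1).indicator (fun z => ‖z‖⁻¹) z + 1 := by
  by_cases hz : z ∈ ball (0 : E3) 1
  · simp [Set.indicator_of_mem hz]
  · rw [Set.indicator_of_notMem hz]
    simp at hz
    simpa using inv_le_one_of_one_le₀ hz

lemma integrable_weight : Integrable (fun z : E3 => ‖z‖⁻¹ * ((1 + ‖z‖) ^ 4)⁻¹) := by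
  refine Integrable.mono' (integrableOn_norm_inv_ball.add integrable_inv_one_add_norm)
    (by fun_prop) (Eventually.of_forall fun z => ?_)
  have h1 := norm_inv_le z
  have h2 : ((1 + ‖z‖) ^ 4)⁻¹ ≤ 1 := inv_le_one_of_one_le₀ (one_le_pow₀ (by simp))
  have h3 : 0 ≤ ((1 + ‖z‖) ^ 4)⁻¹ := by positivity
  have h4 : 0 ≤ (ball (0 : E3) 1).indicator (fun z => ‖z‖⁻¹) z :=
    Set.indicator_nonneg (fun _ _ => by positivity) _
  rw [Real.norm_of_nonneg (by positivity)]
  simp only [Pi.add_apply]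
  nlinarith

lemma integrable_norm_inv_mul (f : 𝓢(E3, ℝ)) (w : E3) :
    Integrable (fun x => ‖w - x‖⁻¹ * |f x|) := by
  obtain ⟨C, hC, hf⟩ := schwartz_decay 0 f
  have h1 : Integrable fun x => (ball (0 : E3) 1).indicator (fun z => ‖z‖⁻¹) (w - x) :=
    integrableOn_norm_inv_ball.comp_sub_left w
  refine Integrable.mono' ((h1.mul_const C).add f.integrable.norm)
    ((by fun_prop : Measurable fun x : E3 => ‖w - x‖⁻¹).aestronglyMeasurable.mul
      f.continuous.abs.aestronglyMeasurable) (Eventually.of_forall fun x => ?_)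
  have h2 := norm_inv_le (w - x)
  have h3 := hf x
  simp only [pow_zero, inv_one, mul_one, Real.norm_eq_abs] at h3
  have h4 : 0 ≤ (ball (0 : E3) 1).indicator (fun z => ‖z‖⁻¹) (w - x) :=
    Set.indicator_nonneg (fun _ _ => by positivity) _
  rw [Real.norm_of_nonneg (by positivity)]
  simp only [Pi.add_apply, Real.norm_eq_abs]
  nlinarith [abs_nonneg (f x)]

lemma exists_bound_norm_inv (f : 𝓢(E3, ℝ)) :
    ∃ C, 0 ≤ C ∧ ∀ w, ∫ x, ‖w - x‖⁻¹ * |f x| ≤ C := by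
  obtain ⟨C, hC, hf⟩ := schwartz_decay 0 f
  have h4 : ∀ z, 0 ≤ (ball (0 : E3) 1).indicator (fun z => ‖z‖⁻¹) z := fun z =>
    Set.indicator_nonneg (fun _ _ => by positivity) _
  refine ⟨(∫ z, (ball (0 : E3) 1).indicator (fun z => ‖z‖⁻¹) z) * C + ∫ x, ‖f x‖,
    add_nonneg (mul_nonneg (integral_nonneg h4) hC) (integral_nonneg fun _ => norm_nonneg _),
    fun w => ?_⟩
  have h1 : Integrable fun x => (ball (0 : E3) 1).indicator (fun z => ‖z‖⁻¹) (w - x) :=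
    integrableOn_norm_inv_ball.comp_sub_left w
  rw [← integral_sub_left_eq_self ((ball (0 : E3) 1).indicator fun z => ‖z‖⁻¹) volume w,
    ← integral_mul_const,
    ← integral_add (h1.mul_const C) f.integrable.norm]
  refine integral_mono (integrable_norm_inv_mul f w) ((h1.mul_const C).add f.integrable.norm)
    fun x => ?_
  have h2 := norm_inv_le (w - x)
  have h3 := hf x
  simp only [pow_zero, inv_one, mul_one, Real.norm_eq_abs] at h3
  simp only [Real.norm_eq_abs]
  nlinarith [abs_nonneg (f x), h4 (w - x)]

/-- The convolution `k * f`; it takes the junk value `0` where the integrand is not integrable. -/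
noncomputable def cv (k f : E3 → ℝ) (w : E3) : ℝ := ∫ x, k (w - x) * f x

variable {k : E3 → ℝ} {c : ℝ}

lemma cv_integrable (hk : Measurable k) (hb : ∀ z, |k z| ≤ c * ‖z‖⁻¹) (f : 𝓢(E3, ℝ)) (w : E3) :
    Integrable (fun x => k (w - x) * f x) := by
  refine Integrable.mono' ((integrable_norm_inv_mul f w).const_mul c)
    ((hk.comp (measurable_const.sub measurable_id)).aestronglyMeasurable.mul
      f.continuous.aestronglyMeasurable) (Eventually.of_forall fun x => ?_)
  rw [Real.norm_eq_abs, abs_mul, ← mul_assoc]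
  exact mul_le_mul_of_nonneg_right (hb _) (abs_nonneg _)

/-- A bound on `k * f` that is uniform over all kernels with `|k z| ≤ c |z|⁻¹` off the origin; the
uniformity is what allows dominated convergence for the regularised kernels. -/
lemma cv_bound (f : 𝓢(E3, ℝ)) (c : ℝ) (hc : 0 ≤ c) : ∃ C, 0 ≤ C ∧ ∀ k : E3 → ℝ,
    (∀ z, z ≠ 0 → |k z| ≤ c * ‖z‖⁻¹) → ∀ w, |cv k f w| ≤ C := by
  obtain ⟨C, hC, h⟩ := exists_bound_norm_inv f
  refine ⟨c * C, by positivity, fun k hb w => ?_⟩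
  refine le_trans ?_ (mul_le_mul_of_nonneg_left (h w) hc)
  rw [← integral_const_mul, ← Real.norm_eq_abs]
  refine norm_integral_le_of_norm_le ((integrable_norm_inv_mul f w).const_mul c) ?_
  filter_upwards [compl_mem_ae_iff.2 (measure_singleton w)] with x hx
  rw [Real.norm_eq_abs, abs_mul, ← mul_assoc]
  refine mul_le_mul_of_nonneg_right (hb _ ?_) (abs_nonneg _)
  rw [sub_ne_zero]
  exact fun h => hx h.symm

lemma cv_eq (k f : E3 → ℝ) (w : E3) : cv k f w = ∫ z, k z * f (w - z) := by
  rw [cv, ← integral_sub_left_eq_self _ volume w]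
  simp

/-- Differentiation under the integral sign, with all derivatives on the Schwartz factor, so that no
regularity of the kernel is needed. -/
lemma cv_hasFDerivAt (hk : Measurable k) (hb : ∀ z, |k z| ≤ c * ‖z‖⁻¹) (f : 𝓢(E3, ℝ)) (w : E3) :
    HasFDerivAt (cv k f) (∫ z, k z • fderiv ℝ f (w - z)) w ∧
      Integrable (fun z => k z • fderiv ℝ f (w - z)) := by
  obtain ⟨C, hC, hD⟩ := schwartz_decay 4 (SchwartzMap.fderivCLM ℝ E3 ℝ f)
  have hcont : Continuous (fderiv ℝ f) := (SchwartzMap.fderivCLM ℝ E3 ℝ f).continuous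
  have hcn : ∀ z : E3, 0 ≤ c * ‖z‖⁻¹ := fun z => (abs_nonneg _).trans (hb z)
  have hbound : ∀ z : E3, ∀ x ∈ ball w 1, ‖k z • fderiv ℝ f (x - z)‖ ≤
      (C * (2 + ‖w‖) ^ 4) * c * (‖z‖⁻¹ * ((1 + ‖z‖) ^ 4)⁻¹) := by
    intro z x hx
    have h1 := hD (x - z)
    rw [SchwartzMap.fderivCLM_apply] at h1
    have hx' : ‖x‖ ≤ ‖w‖ + 1 := by
      have := norm_sub_norm_le x w
      rw [mem_ball, dist_eq_norm] at hx
      linarith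
    have h2 : 1 + ‖z‖ ≤ (2 + ‖w‖) * (1 + ‖x - z‖) := by
      have := norm_sub_norm_le z x
      rw [norm_sub_rev] at this
      nlinarith [norm_nonneg (x - z), norm_nonneg w]
    have h3 : ((1 + ‖x - z‖) ^ 4)⁻¹ ≤ (2 + ‖w‖) ^ 4 * ((1 + ‖z‖) ^ 4)⁻¹ := by
      rw [← div_eq_mul_inv, inv_eq_one_div, div_le_div_iff₀ (by positivity) (by positivity),
        one_mul, ← mul_pow]
      gcongr
    rw [norm_smul, Real.norm_eq_abs]
    calc |k z| * ‖fderiv ℝ f (x - z)‖ ≤ (c * ‖z‖⁻¹) * (C * ((2 + ‖w‖) ^ 4 * ((1 + ‖z‖) ^ 4)⁻¹)) :=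
          mul_le_mul (hb z) (h1.trans (mul_le_mul_of_nonneg_left h3 hC)) (norm_nonneg _) (hcn z)
      _ = _ := by ring
  have hbi := integrable_weight.const_mul ((C * (2 + ‖w‖) ^ 4) * c)
  have hmeas : AEStronglyMeasurable (fun z => k z • fderiv ℝ f (w - z)) volume :=
    hk.aestronglyMeasurable.smul
      (hcont.comp (continuous_const.sub continuous_id)).aestronglyMeasurable
  have hint : ∀ w, Integrable (fun z => k z * f (w - z)) := fun w => by
    have := (cv_integrable hk hb f w).comp_sub_left w
    simpa using this
  refine ⟨?_, Integrable.mono' hbi hmeas (Eventually.of_forall fun z =>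
    hbound z w (mem_ball_self one_pos))⟩
  have := hasFDerivAt_integral_of_dominated_of_fderiv_le (𝕜 := ℝ) (μ := volume)
    (F := fun w z => k z * f (w - z)) (F' := fun w z => k z • fderiv ℝ f (w - z)) (x₀ := w)
    (ball_mem_nhds w one_pos) (Eventually.of_forall fun w => (hint w).aestronglyMeasurable)
    (hint w) hmeas (Eventually.of_forall hbound) hbi (Eventually.of_forall fun z x _ => by
      have h := (f.hasFDerivAt (x - z)).comp x ((hasFDerivAt_id x).sub_const z)
      simpa using h.const_mul (k z))
  exact this.congr_of_eventuallyEq (Eventually.of_forall fun x => cv_eq k f x)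

lemma cv_differentiable (hk : Measurable k) (hb : ∀ z, |k z| ≤ c * ‖z‖⁻¹) (f : 𝓢(E3, ℝ)) :
    Differentiable ℝ (cv k f) := fun w => (cv_hasFDerivAt hk hb f w).1.differentiableAt

lemma pd_cv (hk : Measurable k) (hb : ∀ z, |k z| ≤ c * ‖z‖⁻¹) (f : 𝓢(E3, ℝ)) (i : Fin 3) :
    pd i (cv k f) = cv k (pdS i f) := by
  ext w
  have h := cv_hasFDerivAt hk hb f w
  rw [pd, h.1.fderiv, ContinuousLinearMap.integral_apply h.2, cv_eq, pdS_coe]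
  rfl

end

/-! ### The weak form of the collision operator -/

section
open Filter Topology SchwartzMap Metric

lemma abs_coord_le (z : E3) (i : Fin 3) : |z i| ≤ ‖z‖ := by
  simpa using PiLp.norm_apply_le z i

lemma aK_eq (z : E3) (i j : Fin 3) :
    aK z i j = ‖z‖⁻¹ * ((if i = j then (1 : ℝ) else 0) - z i * z j / ‖z‖ ^ 2) := rfl

lemma measurable_aK (i j : Fin 3) : Measurable fun z : E3 => aK z i j := by
  simp only [aK_eq]
  fun_prop

lemma abs_aK_le (i j : Fin 3) (z : E3) : |aK z i j| ≤ 2 * ‖z‖⁻¹ := by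
  rw [aK_eq, abs_mul, abs_of_nonneg (by positivity : 0 ≤ ‖z‖⁻¹), mul_comm]
  refine mul_le_mul_of_nonneg_right ?_ (by positivity)
  have h1 : |if i = j then (1 : ℝ) else 0| ≤ 1 := by split_ifs <;> simp
  have h2 : |z i * z j / ‖z‖ ^ 2| ≤ 1 := by
    rw [abs_div, abs_mul, abs_of_nonneg (by positivity : 0 ≤ ‖z‖ ^ 2)]
    refine div_le_one_of_le₀ ?_ (by positivity)
    rw [sq]
    exact mul_le_mul (abs_coord_le z i) (abs_coord_le z j) (abs_nonneg _) (norm_nonneg _)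
  rw [abs_le] at *
  constructor <;> linarith [h1.1, h1.2, h2.1, h2.2]

/-- `A_ij = a_ij * f`. -/
noncomputable def Acv (i j : Fin 3) (f : E3 → ℝ) : E3 → ℝ := cv (fun z => aK z i j) f

lemma Acv_differentiable (i j : Fin 3) (f : 𝓢(E3, ℝ)) : Differentiable ℝ (Acv i j f) :=
  cv_differentiable (measurable_aK i j) (abs_aK_le i j) f

lemma pd_Acv (i j l : Fin 3) (f : 𝓢(E3, ℝ)) : pd l (Acv i j f) = Acv i j (pdS l f) :=
  pd_cv (measurable_aK i j) (abs_aK_le i j) f l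

lemma Acv_bound (i j : Fin 3) (f : 𝓢(E3, ℝ)) : ∃ C, ∀ w, ‖Acv i j f w‖ ≤ C := by
  obtain ⟨C, -, h⟩ := cv_bound f 2 (by norm_num)
  exact ⟨C, fun w => h _ (fun z _ => abs_aK_le i j z) w⟩

lemma Acv_mul_integrable (i j : Fin 3) (f : 𝓢(E3, ℝ)) {u : E3 → ℝ} (hu : Integrable u) :
    Integrable fun w => Acv i j f w * u w := by
  obtain ⟨C, h⟩ := Acv_bound i j f
  exact hu.bdd_mul (Acv_differentiable i j f).continuous.aestronglyMeasurable
    (Eventually.of_forall h)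

lemma schwartz_mul_integrable (f g : 𝓢(E3, ℝ)) : Integrable fun w => f w * g w := by
  obtain ⟨C, -, h⟩ := schwartz_decay 0 f
  refine g.integrable.bdd_mul f.continuous.aestronglyMeasurable (c := C)
    (Eventually.of_forall fun x => ?_)
  simpa using h x

lemma pd_differentiable (i : Fin 3) (f : 𝓢(E3, ℝ)) : Differentiable ℝ (pd i f) := by
  rw [← pdS_coe]
  exact (pdS i f).differentiable

/-- The flux component `Σ_j (A_ij ∂_j h - (a_ij * ∂_j g) h)`. -/
noncomputable def flux (g h : 𝓢(E3, ℝ)) (i : Fin 3) (w : E3) : ℝ :=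
  ∑ j, (Acv i j g w * pdS j h w - Acv i j (pdS j g) w * h w)

lemma flux_eq (g h : 𝓢(E3, ℝ)) (i : Fin 3) (w : E3) :
    ∫ vs : E3, ∑ j : Fin 3, aK (w - vs) i j * (g vs * pd j h w - pd j g vs * h w)
      = flux g h i w := by
  rw [flux, integral_finsetSum]
  · refine Finset.sum_congr rfl fun j _ => ?_
    rw [Acv, cv, Acv, cv, ← integral_mul_const, ← integral_mul_const, ← integral_sub]
    · congr 1
      ext x
      rw [pdS_coe, pdS_coe]
      ring
    · exact (cv_integrable (measurable_aK i j) (abs_aK_le i j) g w).mul_const _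
    · exact (cv_integrable (measurable_aK i j) (abs_aK_le i j) (pdS j g) w).mul_const _
  · intro j _
    have h1 := (cv_integrable (measurable_aK i j) (abs_aK_le i j) g w).mul_const (pd j h w)
    have h2 := (cv_integrable (measurable_aK i j) (abs_aK_le i j) (pdS j g) w).mul_const (h w)
    refine (h1.sub h2).congr (Eventually.of_forall fun x => ?_)
    simp only [Pi.sub_apply, pdS_coe]
    ring

lemma flux_hasFDerivAt (g h : 𝓢(E3, ℝ)) (i : Fin 3) : Differentiable ℝ (flux g h i) := by
  have h1 := fun j => Acv_differentiable i j g
  have h2 := fun j => Acv_differentiable i j (pdS j g)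
  have h3 := fun j => (pdS j h).differentiable
  have h4 := h.differentiable
  unfold flux
  fun_prop

lemma pd_flux (g h : 𝓢(E3, ℝ)) (i : Fin 3) (w : E3) : pd i (flux g h i) w =
    ∑ j, ((Acv i j g w * pdS i (pdS j h) w + Acv i j (pdS i g) w * pdS j h w)
      - (Acv i j (pdS j g) w * pdS i h w + Acv i j (pdS i (pdS j g)) w * h w)) := by
  have h1 := fun j => (Acv_differentiable i j g w).hasFDerivAt
  have h2 := fun j => (Acv_differentiable i j (pdS j g) w).hasFDerivAt
  have h3 := fun j => ((pdS j h).differentiable w).hasFDerivAt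
  have h4 := (h.differentiable w).hasFDerivAt
  have := HasFDerivAt.fun_sum (u := Finset.univ) (fun j _ => ((h1 j).mul (h3 j)).sub ((h2 j).mul h4))
  have e : flux g h i = fun w => ∑ j, ((Acv i j g * pdS j h) - (Acv i j (pdS j g) * h)) w := by
    ext w; simp [flux]
  rw [pd, e, this.fderiv]
  simp only [_root_.sum_apply, sub_apply, add_apply, smul_apply, smul_eq_mul]
  refine Finset.sum_congr rfl fun j _ => ?_
  have e1 := congrFun (pd_Acv i j i g) w
  have e2 := congrFun (pd_Acv i j i (pdS j g)) w
  have e3 := congrFun (pdS_coe i (pdS j h)) w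
  have e4 := congrFun (pdS_coe i h) w
  simp only [pd] at e1 e2 e3 e4
  rw [← e1, ← e2, e3, e4]
  ring

lemma flux_mul_integrable (g h f : 𝓢(E3, ℝ)) (i : Fin 3) :
    Integrable fun w => flux g h i w * f w := by
  simp only [flux, Finset.sum_mul, sub_mul, mul_assoc]
  exact integrable_finsetSum _ fun j _ =>
    (Acv_mul_integrable i j _ (schwartz_mul_integrable _ _)).sub
      (Acv_mul_integrable i j _ (schwartz_mul_integrable _ _))

lemma pd_flux_mul_integrable (g h f : 𝓢(E3, ℝ)) (i : Fin 3) :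
    Integrable fun w => pd i (flux g h i) w * f w := by
  simp only [pd_flux, Finset.sum_mul, sub_mul, add_mul, mul_assoc]
  exact integrable_finsetSum _ fun j _ =>
    ((Acv_mul_integrable i j _ (schwartz_mul_integrable _ _)).add
      (Acv_mul_integrable i j _ (schwartz_mul_integrable _ _))).sub
    ((Acv_mul_integrable i j _ (schwartz_mul_integrable _ _)).add
      (Acv_mul_integrable i j _ (schwartz_mul_integrable _ _)))

/-- The weak form: one integration by parts moves the divergence onto `h`. -/
lemma pairL_eq (g h : 𝓢(E3, ℝ)) : pairL (landauQ g h) h =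
    - (∫ w, ∑ i, ∑ j, Acv i j g w * (pdS j h w * pdS i h w))
      + ∑ i, ∑ j, ∫ w, Acv i j (pdS j g) w * (h w * pdS i h w) := by
  have e : ∀ w, landauQ g h w = ∑ i, pd i (flux g h i) w := by
    intro w
    refine Finset.sum_congr rfl fun i _ => ?_
    rw [pd, funext (flux_eq g h i)]
  have ibp : ∀ i, ∫ w, pd i (flux g h i) w * h w = - ∫ w, flux g h i w * pdS i h w := by
    intro i
    rw [eq_neg_iff_add_eq_zero, add_comm, ← eq_neg_iff_add_eq_zero, pdS_coe]
    refine integral_mul_fderiv_eq_neg_fderiv_mul_of_integrable (pd_flux_mul_integrable g h h i)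
      ?_ (flux_mul_integrable g h h i) (fun x _ => flux_hasFDerivAt g h i x)
      (fun x _ => h.differentiable x)
    have := flux_mul_integrable g h (pdS i h) i
    rwa [pdS_coe] at this
  have hI1 : ∀ i j, Integrable fun w => Acv i j g w * (pdS j h w * pdS i h w) := fun i j =>
    Acv_mul_integrable i j _ (schwartz_mul_integrable _ _)
  have hI2 : ∀ i j, Integrable fun w => Acv i j (pdS j g) w * (h w * pdS i h w) := fun i j =>
    Acv_mul_integrable i j _ (schwartz_mul_integrable _ _)
  simp only [pairL, e, Finset.sum_mul]
  rw [integral_finsetSum _ (fun i _ => pd_flux_mul_integrable g h h i), integral_finsetSum _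
    (fun i _ => integrable_finsetSum _ fun j _ => hI1 i j), ← Finset.sum_neg_distrib,
    ← Finset.sum_add_distrib]
  refine Finset.sum_congr rfl fun i _ => ?_
  rw [ibp]
  simp only [flux, Finset.sum_mul, sub_mul, mul_assoc]
  rw [integral_finsetSum _ (fun j _ => by exact (hI1 i j).sub (hI2 i j)), integral_finsetSum _
    (fun j _ => hI1 i j), ← Finset.sum_neg_distrib, ← Finset.sum_neg_distrib,
    ← Finset.sum_add_distrib]
  refine Finset.sum_congr rfl fun j _ => ?_
  rw [integral_sub (hI1 i j) (hI2 i j)]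
  ring

end

/-! ### Regularised kernels -/

section
open Filter Topology SchwartzMap Metric

/-- `(|z|² + e²)^{-1/2}`. -/
noncomputable def rho (e : ℝ) (z : E3) : ℝ := (√(‖z‖ ^ 2 + e ^ 2))⁻¹

/-- The normalised coordinate `z_i (|z|² + e²)^{-1/2}`. -/
noncomputable def uu (e : ℝ) (i : Fin 3) (z : E3) : ℝ := z i * rho e z

/-- Bounded continuous functions. -/
def Nice (f : E3 → ℝ) : Prop := Continuous f ∧ ∃ C, ∀ z, |f z| ≤ C

lemma Nice.add {f g : E3 → ℝ} (hf : Nice f) (hg : Nice g) : Nice fun z => f z + g z := by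
  obtain ⟨h1, C, hC⟩ := hf
  obtain ⟨h2, D, hD⟩ := hg
  exact ⟨h1.add h2, C + D, fun z => (abs_add_le _ _).trans (add_le_add (hC z) (hD z))⟩

lemma Nice.mul {f g : E3 → ℝ} (hf : Nice f) (hg : Nice g) : Nice fun z => f z * g z := by
  obtain ⟨h1, C, hC⟩ := hf
  obtain ⟨h2, D, hD⟩ := hg
  refine ⟨h1.mul h2, C * D, fun z => ?_⟩
  rw [abs_mul]
  exact mul_le_mul (hC z) (hD z) (abs_nonneg _) ((abs_nonneg _).trans (hC z))

lemma Nice.const (c : ℝ) : Nice fun _ => c := ⟨continuous_const, |c|, fun _ => le_rfl⟩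

lemma Nice.neg {f : E3 → ℝ} (hf : Nice f) : Nice fun z => - f z := by
  simpa using (Nice.const (-1)).mul hf

lemma Nice.sub {f g : E3 → ℝ} (hf : Nice f) (hg : Nice g) : Nice fun z => f z - g z := by
  simpa [sub_eq_add_neg] using hf.add hg.neg

lemma Nice.pow {f : E3 → ℝ} (hf : Nice f) (n : ℕ) : Nice fun z => f z ^ n := by
  induction n with
  | zero => simpa using Nice.const 1
  | succ n ih => simpa [pow_succ] using ih.mul hf

lemma Nice.sum {f : Fin 3 → E3 → ℝ} (hf : ∀ i, Nice (f i)) : Nice fun z => ∑ i, f i z := by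
  simp only [Fin.sum_univ_three]
  exact ((hf 0).add (hf 1)).add (hf 2)

lemma Nice.mul_integrable {f : E3 → ℝ} (hf : Nice f) {u : E3 → ℝ} (hu : Integrable u)
    {p : E3 → E3} (hp : Continuous p) : Integrable fun x => f (p x) * u x := by
  obtain ⟨h1, C, hC⟩ := hf
  exact hu.bdd_mul (h1.comp hp).aestronglyMeasurable (c := C) (Eventually.of_forall fun x => hC _)

lemma coord_line (z : E3) (i j : Fin 3) :
    HasDerivAt (fun t : ℝ => (z + t • (EuclideanSpace.single j 1 : E3)) i)
      (if i = j then 1 else 0) 0 := by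
  have : (fun t : ℝ => (z + t • (EuclideanSpace.single j 1 : E3)) i)
      = fun t => z i + t * (if i = j then 1 else 0) := by
    ext t; simp
  rw [this]
  simpa using ((hasDerivAt_id (0:ℝ)).mul_const (if i = j then (1:ℝ) else 0)).const_add (z i)

lemma rad_pos {e : ℝ} (he : 0 < e) (z : E3) : 0 < ‖z‖ ^ 2 + e ^ 2 := by positivity

lemma rho_pos {e : ℝ} (he : 0 < e) (z : E3) : 0 < rho e z := inv_pos.2 (Real.sqrt_pos.2 (rad_pos he z))

lemma rho_sq {e : ℝ} (he : 0 < e) (z : E3) : rho e z ^ 2 * (‖z‖ ^ 2 + e ^ 2) = 1 := by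
  have := rad_pos he z
  rw [rho, inv_pow, Real.sq_sqrt this.le, inv_mul_cancel₀ this.ne']

lemma rho_nice {e : ℝ} (he : 0 < e) : Nice (rho e) := by
  refine ⟨?_, e⁻¹, fun z => ?_⟩
  · unfold rho
    refine Continuous.inv₀ (by fun_prop) fun z => (Real.sqrt_pos.2 (rad_pos he z)).ne'
  · rw [abs_of_pos (rho_pos he z), rho]
    refine inv_anti₀ he (Real.le_sqrt_of_sq_le ?_)
    nlinarith [sq_nonneg ‖z‖]

lemma uu_nice {e : ℝ} (he : 0 < e) (i : Fin 3) : Nice (uu e i) := by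
  refine ⟨?_, 1, fun z => ?_⟩
  · have := (rho_nice he).1
    unfold uu
    fun_prop
  · rw [← sq_le_one_iff_abs_le_one, uu, mul_pow, mul_comm, ← rho_sq he z]
    have h1 := sq_le_sq' (abs_le.1 (abs_coord_le z i)).1 (abs_le.1 (abs_coord_le z i)).2
    have h2 := sq_nonneg (rho e z)
    have h3 := sq_nonneg e
    nlinarith

lemma sum_uu {e : ℝ} (he : 0 < e) (z : E3) : uu e 0 z ^ 2 + uu e 1 z ^ 2 + uu e 2 z ^ 2 = 1 - e ^ 2 * rho e z ^ 2 := by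
  have h := rho_sq he z
  rw [EuclideanSpace.norm_sq_eq] at h
  simp only [Fin.sum_univ_three, Real.norm_eq_abs, sq_abs] at h
  simp only [uu]
  linarith

lemma rho_line {e : ℝ} (he : 0 < e) (z : E3) (j : Fin 3) :
    HasLineDerivAt ℝ (rho e) (- uu e j z * rho e z ^ 2) z (EuclideanSpace.single j 1) := by
  have hpos := rad_pos he z
  have h1 : ∀ t : ℝ, ‖z + t • (EuclideanSpace.single j 1 : E3)‖ ^ 2 + e ^ 2
      = ‖z‖ ^ 2 + e ^ 2 + (2 * z j) * t + t ^ 2 := by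
    intro t
    rw [norm_add_sq_real, norm_smul, inner_smul_right]
    simp [EuclideanSpace.inner_single_right]
    ring
  have h2 : HasDerivAt (fun t : ℝ => ‖z‖ ^ 2 + e ^ 2 + (2 * z j) * t + t ^ 2) (2 * z j) 0 := by
    have h := (((hasDerivAt_id (0:ℝ)).const_mul (2 * z j)).const_add (‖z‖ ^ 2 + e ^ 2)).add
      ((hasDerivAt_id (0:ℝ)).pow 2)
    refine h.congr_deriv ?_
    simp
  have h3 := (h2.sqrt (by simpa using hpos.ne')).inv (by simpa using (Real.sqrt_pos.2 hpos).ne')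
  unfold HasLineDerivAt
  have h4 : (fun t : ℝ => rho e (z + t • (EuclideanSpace.single j 1 : E3)))
      = (fun t : ℝ => √(‖z‖ ^ 2 + e ^ 2 + (2 * z j) * t + t ^ 2))⁻¹ := by
    ext t
    simp [rho, h1]
  rw [h4]
  refine h3.congr_deriv ?_
  simp only [mul_zero, add_zero, ne_eq, OfNat.ofNat_ne_zero, not_false_eq_true, zero_pow, uu, rho]
  have := (Real.sqrt_pos.2 hpos).ne'
  field_simp

lemma uu_line {e : ℝ} (he : 0 < e) (z : E3) (i j : Fin 3) : HasLineDerivAt ℝ (uu e i)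
    (rho e z * ((if i = j then 1 else 0) - uu e i z * uu e j z)) z
    (EuclideanSpace.single j 1) := by
  have h := (coord_line z i j).mul (rho_line he z j)
  refine h.congr_deriv ?_
  simp [uu]
  split_ifs <;> ring

/-- The regularised kernel `∂_i ∂_j √(|z|² + e²)`. -/
noncomputable def aE (e : ℝ) (i j : Fin 3) (z : E3) : ℝ :=
  rho e z * ((if i = j then 1 else 0) - uu e i z * uu e j z)

/-- `∂_j` of `aE e i j`. -/
noncomputable def daE (e : ℝ) (i j : Fin 3) (z : E3) : ℝ :=
  - rho e z ^ 2 * ((if i = j then 1 else 0) * 2 * uu e j z - 3 * uu e i z * uu e j z ^ 2 + uu e i z)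

/-- `Σ_j ∂_j` of `aE e i j`. -/
noncomputable def kE (e : ℝ) (i : Fin 3) (z : E3) : ℝ :=
  - (uu e i z * rho e z ^ 2 * (2 + 3 * e ^ 2 * rho e z ^ 2))

/-- `∂_i` of `kE e i`. -/
noncomputable def dkE (e : ℝ) (i : Fin 3) (z : E3) : ℝ :=
  - (2 * rho e z ^ 3 * (1 - 3 * uu e i z ^ 2) + 3 * e ^ 2 * rho e z ^ 5 * (1 - 5 * uu e i z ^ 2))

/-- `-Δ²√(|z|² + e²)`, up to a constant factor a nonnegative approximate identity as `e → 0`. -/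
noncomputable def psiE (e : ℝ) (z : E3) : ℝ := 15 * e ^ 4 * rho e z ^ 7

lemma aE_nice {e : ℝ} (he : 0 < e) (i j : Fin 3) : Nice (aE e i j) :=
  (rho_nice he).mul ((Nice.const _).sub ((uu_nice he i).mul (uu_nice he j)))

lemma daE_nice {e : ℝ} (he : 0 < e) (i j : Fin 3) : Nice (daE e i j) :=
  ((rho_nice he).pow 2).neg.mul ((((Nice.const _).mul (uu_nice he j)).sub
    (((Nice.const 3).mul (uu_nice he i)).mul ((uu_nice he j).pow 2))).add (uu_nice he i))

lemma kE_nice {e : ℝ} (he : 0 < e) (i : Fin 3) : Nice (kE e i) :=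
  (((uu_nice he i).mul ((rho_nice he).pow 2)).mul
    ((Nice.const 2).add ((Nice.const _).mul ((rho_nice he).pow 2)))).neg

lemma dkE_nice {e : ℝ} (he : 0 < e) (i : Fin 3) : Nice (dkE e i) :=
  ((((Nice.const 2).mul ((rho_nice he).pow 3)).mul
      ((Nice.const 1).sub ((Nice.const 3).mul ((uu_nice he i).pow 2)))).add
    (((Nice.const _).mul ((rho_nice he).pow 5)).mul
      ((Nice.const 1).sub ((Nice.const 5).mul ((uu_nice he i).pow 2))))).neg

lemma psiE_nice {e : ℝ} (he : 0 < e) : Nice (psiE e) := (Nice.const _).mul ((rho_nice he).pow 7)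

lemma sum_daE {e : ℝ} (he : 0 < e) (i : Fin 3) (z : E3) : ∑ j, daE e i j z = kE e i z := by
  have h := sum_uu he z
  simp only [daE, kE, Fin.sum_univ_three]
  have h2 : (if i = 0 then 1 else 0) * uu e 0 z + (if i = 1 then 1 else 0) * uu e 1 z
      + (if i = 2 then 1 else 0) * uu e 2 z = uu e i z := by
    fin_cases i <;> simp
  linear_combination (- 2 * rho e z ^ 2) * h2 + (3 * rho e z ^ 2 * uu e i z) * h

lemma sum_dkE {e : ℝ} (he : 0 < e) (z : E3) : ∑ i, dkE e i z = - psiE e z := by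
  have h := sum_uu he z
  simp only [dkE, psiE, Fin.sum_univ_three]
  linear_combination (6 * rho e z ^ 3 + 15 * e ^ 2 * rho e z ^ 5) * h

lemma aE_line {e : ℝ} (he : 0 < e) (i j : Fin 3) (z : E3) :
    HasLineDerivAt ℝ (aE e i j) (daE e i j z) z (EuclideanSpace.single j 1) := by
  have h := (rho_line he z j).mul (((uu_line he z i j).mul (uu_line he z j j)).const_sub
    (if i = j then (1:ℝ) else 0))
  refine h.congr_deriv ?_
  simp [daE]
  split_ifs <;> ring

lemma kE_line {e : ℝ} (he : 0 < e) (i : Fin 3) (z : E3) :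
    HasLineDerivAt ℝ (kE e i) (dkE e i z) z (EuclideanSpace.single i 1) := by
  have h := ((uu_line he z i i).mul ((rho_line he z i).pow 2)).mul
    ((((rho_line he z i).pow 2).const_mul (3 * e ^ 2)).const_add 2) |>.neg
  refine h.congr_deriv ?_
  simp [dkE]
  ring

end

/-! ### The drift term -/

section
open Filter Topology SchwartzMap Metric

lemma pdS_line (j : Fin 3) (f : 𝓢(E3, ℝ)) (x : E3) :
    HasLineDerivAt ℝ f (pdS j f x) x (EuclideanSpace.single j 1) := by
  rw [pdS_coe]
  exact (f.differentiable x).hasFDerivAt.hasLineDerivAt _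

/-- Integration by parts in the integration variable of a convolution. -/
lemma ibp_left {k k' : E3 → ℝ} (hk : Nice k) (hk' : Nice k') (j : Fin 3)
    (hd : ∀ z, HasLineDerivAt ℝ k (k' z) z (EuclideanSpace.single j 1)) (f : 𝓢(E3, ℝ)) (w : E3) :
    cv k (pdS j f) w = cv k' f w := by
  have h := integral_bilinear_hasLineDerivAt_right_eq_neg_left_of_integrable
    (B := ContinuousLinearMap.mul ℝ ℝ) (μ := (volume : Measure E3))
    (v := EuclideanSpace.single j 1) (f := fun x => k (w - x)) (f' := fun x => - k' (w - x))
    (g := f) (g' := pdS j f) (by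
      simpa using (hk'.mul_integrable f.integrable (continuous_const.sub continuous_id)).neg)
    (by simpa using (hk.mul_integrable (pdS j f).integrable (continuous_const.sub continuous_id)))
    (by simpa using (hk.mul_integrable f.integrable (continuous_const.sub continuous_id)))
    (fun x _ => by
      have h1 : HasDerivAt (fun t : ℝ => k (w - x + t • (EuclideanSpace.single j 1 : E3)))
        (k' (w - x)) (-0) := by
        rw [neg_zero]; exact hd (w - x)
      have h2 := h1.scomp (0:ℝ) (hasDerivAt_neg (0:ℝ))
      unfold HasLineDerivAt
      refine (h2.congr_deriv (by simp)).congr_of_eventuallyEq (Eventually.of_forall fun t => ?_)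
      simp only [Function.comp]
      congr 1
      module)
    (fun x _ => pdS_line j f x)
  simpa [cv, integral_neg] using h

/-- Integration by parts in the outer variable of a convolution. -/
lemma ibp_right {k k' : E3 → ℝ} (hk : Nice k) (hk' : Nice k') (j : Fin 3)
    (hd : ∀ z, HasLineDerivAt ℝ k (k' z) z (EuclideanSpace.single j 1)) (f : 𝓢(E3, ℝ)) (x : E3) :
    ∫ w, k (w - x) * pdS j f w = - ∫ w, k' (w - x) * f w := by
  have h := integral_bilinear_hasLineDerivAt_right_eq_neg_left_of_integrable
    (B := ContinuousLinearMap.mul ℝ ℝ) (μ := (volume : Measure E3))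
    (v := EuclideanSpace.single j 1) (f := fun w => k (w - x)) (f' := fun w => k' (w - x))
    (g := f) (g' := pdS j f) (by
      simpa using (hk'.mul_integrable f.integrable (continuous_id.sub continuous_const)))
    (by simpa using (hk.mul_integrable (pdS j f).integrable (continuous_id.sub continuous_const)))
    (by simpa using (hk.mul_integrable f.integrable (continuous_id.sub continuous_const)))
    (fun w _ => by
      have h1 : HasDerivAt (fun t : ℝ => k (w - x + t • (EuclideanSpace.single j 1 : E3)))
        (k' (w - x)) 0 := hd (w - x)
      unfold HasLineDerivAt
      refine h1.congr_of_eventuallyEq (Eventually.of_forall fun t => ?_)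
      simp only
      congr 1
      module)
    (fun x _ => pdS_line j f x)
  simpa using h

lemma Nice.prod_integrable {k : E3 → ℝ} (hk : Nice k) (f φ : 𝓢(E3, ℝ)) :
    Integrable (fun p : E3 × E3 => k (p.1 - p.2) * f p.2 * φ p.1) (volume.prod volume) := by
  obtain ⟨h1, C, hC⟩ := hk
  have := (φ.integrable (μ := volume)).mul_prod (f.integrable (μ := volume))
  refine (this.bdd_mul (f := fun p : E3 × E3 => k (p.1 - p.2))
    (h1.comp (continuous_fst.sub continuous_snd)).aestronglyMeasurable (c := C)
    (Eventually.of_forall fun x => hC _)).congr (Eventually.of_forall fun p => ?_)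
  simp only
  ring

lemma Nice.cv_mul_integrable {k : E3 → ℝ} (hk : Nice k) (f φ : 𝓢(E3, ℝ)) :
    Integrable fun w => cv k f w * φ w := by
  have := (hk.prod_integrable f φ).integral_prod_left
  simpa [cv, integral_mul_const] using this

lemma cv_fubini {k : E3 → ℝ} (hk : Nice k) (f φ : 𝓢(E3, ℝ)) :
    ∫ w, cv k f w * φ w = ∫ x, (∫ w, k (w - x) * φ w) * f x := by
  simp only [cv, ← integral_mul_const]
  rw [integral_integral_swap (hk.prod_integrable f φ)]
  congr 1; ext x; congr 1; ext w; ring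

/-- The drift identity for the regularised kernel: both derivatives are moved onto the kernel, where
they produce `-psiE`. -/
lemma drift_reg {e : ℝ} (he : 0 < e) (g φ : 𝓢(E3, ℝ)) :
    ∑ i, ∑ j, ∫ w, cv (aE e i j) (pdS j g) w * pdS i φ w
      = ∫ x, (∫ w, psiE e (w - x) * φ w) * g x := by
  -- `∂_j` goes from `g` to the kernel; Fubini then allows `∂_i` to go from `φ` to the kernel too.
  have h1 : ∀ i, ∑ j, ∫ w, cv (aE e i j) (pdS j g) w * pdS i φ w
      = ∫ x, (- ∫ w, dkE e i (w - x) * φ w) * g x := by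
    intro i
    simp only [fun w j => ibp_left (aE_nice he i j) (daE_nice he i j) j (aE_line he i j) g w]
    rw [← integral_finsetSum _ fun j _ => (daE_nice he i j).cv_mul_integrable g (pdS i φ)]
    have h2 : ∀ w, ∑ j, cv (daE e i j) g w * pdS i φ w = cv (kE e i) g w * pdS i φ w := by
      intro w
      rw [← Finset.sum_mul]
      congr 1
      simp only [cv]
      rw [← integral_finsetSum _ fun j _ => (daE_nice he i j).mul_integrable g.integrable
        (p := fun x => w - x) (continuous_const.sub continuous_id)]
      simp only [← Finset.sum_mul, sum_daE he]
    simp only [h2]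
    rw [cv_fubini (kE_nice he i)]
    simp only [ibp_right (kE_nice he i) (dkE_nice he i) i (kE_line he i)]
  simp only [h1]
  have hI : ∀ i, Integrable fun x => (- ∫ w, dkE e i (w - x) * φ w) * g x := by
    intro i
    have h := ((dkE_nice he i).prod_integrable g φ).integral_prod_right.neg
    refine h.congr (Eventually.of_forall fun x => ?_)
    simp only [Pi.neg_apply]
    rw [neg_mul, ← integral_mul_const]
    congr 2; ext w; ring
  rw [← integral_finsetSum _ fun i _ => hI i]
  congr 1; ext x
  rw [← Finset.sum_mul]
  congr 1
  rw [Finset.sum_neg_distrib, ← integral_finsetSum _ fun i _ => (dkE_nice he i).mul_integrable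
    φ.integrable (p := fun w => w - x) (continuous_id.sub continuous_const), ← integral_neg]
  congr 1; ext w
  rw [← Finset.sum_mul, sum_dkE he]
  ring


lemma rho_le_inv (e : ℝ) (z : E3) (hz : z ≠ 0) : rho e z ≤ ‖z‖⁻¹ := by
  refine inv_anti₀ (norm_pos_iff.2 hz) (Real.le_sqrt_of_sq_le ?_)
  nlinarith [sq_nonneg e]

lemma abs_uu_le (e : ℝ) (i : Fin 3) (z : E3) (hz : z ≠ 0) : |uu e i z| ≤ 1 := by
  rw [uu, abs_mul, abs_of_nonneg (a := rho e z) (inv_nonneg.2 (Real.sqrt_nonneg _))]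
  have h := mul_le_mul (abs_coord_le z i) (rho_le_inv e z hz) (inv_nonneg.2 (Real.sqrt_nonneg _))
    (norm_nonneg z)
  rwa [mul_inv_cancel₀ (norm_ne_zero_iff.2 hz)] at h

lemma abs_aE_le (e : ℝ) (i j : Fin 3) (z : E3) (hz : z ≠ 0) : |aE e i j z| ≤ 2 * ‖z‖⁻¹ := by
  have h0 : 0 ≤ rho e z := inv_nonneg.2 (Real.sqrt_nonneg _)
  rw [aE, abs_mul, abs_of_nonneg h0, mul_comm]
  refine mul_le_mul ?_ (rho_le_inv e z hz) h0 (by norm_num)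
  have h1 : |if i = j then (1 : ℝ) else 0| ≤ 1 := by split_ifs <;> simp
  have h2 : |uu e i z * uu e j z| ≤ 1 := by
    rw [abs_mul]
    exact mul_le_one₀ (abs_uu_le e i z hz) (abs_nonneg _) (abs_uu_le e j z hz)
  rw [abs_le] at *
  constructor <;> linarith [h1.1, h1.2, h2.1, h2.2]

lemma tendsto_aE (i j : Fin 3) (z : E3) (hz : z ≠ 0) :
    Tendsto (fun e => aE e i j z) (𝓝[>] 0) (𝓝 (aK z i j)) := by
  have hn : ‖z‖ ≠ 0 := norm_ne_zero_iff.2 hz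
  have hr : ContinuousAt (fun e : ℝ => rho e z) 0 := by
    unfold rho
    refine ContinuousAt.inv₀ (by fun_prop) ?_
    simp [Real.sqrt_sq, hn]
  have hr0 : rho 0 z = ‖z‖⁻¹ := by simp [rho, Real.sqrt_sq]
  have h : ContinuousAt (fun e : ℝ => aE e i j z) 0 := by
    unfold aE uu
    fun_prop
  have h2 : aE 0 i j z = aK z i j := by
    rw [aE, aK_eq, uu, uu, hr0]
    field_simp
  rw [← h2]
  exact h.tendsto.mono_left nhdsWithin_le_nhds

lemma ae_sub_ne (w : E3) : ∀ᵐ x : E3, w - x ≠ 0 := by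
  filter_upwards [compl_mem_ae_iff.2 (measure_singleton w)] with x hx
  rw [sub_ne_zero]
  exact fun h => hx h.symm

lemma tendsto_cv_aE (i j : Fin 3) (f : 𝓢(E3, ℝ)) (w : E3) :
    Tendsto (fun e => cv (aE e i j) f w) (𝓝[>] 0) (𝓝 (Acv i j f w)) := by
  unfold Acv cv
  refine tendsto_integral_filter_of_dominated_convergence
    (fun x => 2 * (‖w - x‖⁻¹ * |f x|)) ?_ ?_ ((integrable_norm_inv_mul f w).const_mul 2) ?_
  · filter_upwards [self_mem_nhdsWithin] with e he
    exact ((aE_nice he i j).mul_integrable f.integrable (p := fun x => w - x)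
      (continuous_const.sub continuous_id)).aestronglyMeasurable
  · refine Eventually.of_forall fun e => ?_
    filter_upwards [ae_sub_ne w] with x hx
    rw [Real.norm_eq_abs, abs_mul, ← mul_assoc]
    exact mul_le_mul_of_nonneg_right (abs_aE_le e i j _ hx) (abs_nonneg _)
  · filter_upwards [ae_sub_ne w] with x hx
    exact (tendsto_aE i j _ hx).mul_const _

lemma tendsto_drift_left (i j : Fin 3) (f φ : 𝓢(E3, ℝ)) :
    Tendsto (fun e => ∫ w, cv (aE e i j) f w * φ w) (𝓝[>] 0) (𝓝 (∫ w, Acv i j f w * φ w)) := by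
  obtain ⟨C, hC, h⟩ := cv_bound f 2 (by norm_num)
  refine tendsto_integral_filter_of_dominated_convergence
    (fun x => C * |φ x|) ?_ ?_ (φ.integrable.abs.const_mul C) ?_
  · filter_upwards [self_mem_nhdsWithin] with e he
    exact ((aE_nice he i j).cv_mul_integrable f φ).aestronglyMeasurable
  · refine Eventually.of_forall fun e => Eventually.of_forall fun w => ?_
    rw [Real.norm_eq_abs, abs_mul]
    exact mul_le_mul_of_nonneg_right (h _ (abs_aE_le e i j) w) (abs_nonneg _)
  · exact Eventually.of_forall fun w => (tendsto_cv_aE i j f w).mul_const _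

lemma psiE_nonneg (e : ℝ) (z : E3) : 0 ≤ psiE e z := by
  have : 0 ≤ rho e z := inv_nonneg.2 (Real.sqrt_nonneg _)
  unfold psiE
  positivity

lemma integrable_psiE : Integrable (psiE 1) := by
  refine Integrable.mono' (integrable_inv_one_add_norm.const_mul (15 * 2 ^ 4))
    (psiE_nice one_pos).1.aestronglyMeasurable (Eventually.of_forall fun z => ?_)
  rw [Real.norm_of_nonneg (psiE_nonneg _ _), psiE]
  have h0 := rho_pos one_pos z
  have h1 := rho_sq one_pos z
  have h2 : rho 1 z ≤ 1 := by nlinarith [sq_nonneg ‖z‖, mul_nonneg (sq_nonneg (rho 1 z)) (sq_nonneg ‖z‖)]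
  have h3 : rho 1 z * (1 + ‖z‖) ≤ 2 := by
    refine abs_le_of_sq_le_sq' (a := rho 1 z * (1 + ‖z‖)) (b := 2) ?_ (by norm_num) |>.2
    nlinarith [mul_nonneg (sq_nonneg (rho 1 z)) (sq_nonneg (‖z‖ - 1))]
  have h4 : rho 1 z ^ 7 ≤ rho 1 z ^ 4 := pow_le_pow_of_le_one h0.le h2 (by norm_num)
  have h5 : (rho 1 z * (1 + ‖z‖)) ^ 4 ≤ 2 ^ 4 := by gcongr
  rw [mul_pow] at h5
  rw [← div_eq_mul_inv, le_div_iff₀ (by positivity)]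
  have : rho 1 z ^ 7 * (1 + ‖z‖) ^ 4 ≤ rho 1 z ^ 4 * (1 + ‖z‖) ^ 4 := by gcongr
  linarith

lemma psiE_smul {e : ℝ} (he : 0 < e) (y : E3) : psiE e (e • y) = (e ^ 3)⁻¹ * psiE 1 y := by
  have h : rho e (e • y) = e⁻¹ * rho 1 y := by
    rw [rho, rho, norm_smul, Real.norm_of_nonneg he.le, ← mul_inv]
    congr 1
    rw [show (e * ‖y‖) ^ 2 + e ^ 2 = e ^ 2 * (‖y‖ ^ 2 + 1 ^ 2) by ring, Real.sqrt_mul (sq_nonneg e),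
      Real.sqrt_sq he.le]
  rw [psiE, psiE, h]
  field_simp

/-- `psiE e` is `e⁻³ psiE 1 (·/e)`, so that the mass is preserved as `e → 0`. -/
lemma psiE_scale {e : ℝ} (he : 0 < e) (φ : E3 → ℝ) (x : E3) :
    ∫ w, psiE e (w - x) * φ w = ∫ y, psiE 1 y * φ (x + e • y) := by
  have h1 := integral_add_right_eq_self (μ := (volume : Measure E3))
    (fun w => psiE e (w - x) * φ w) x
  rw [← h1]
  have h2 := Measure.integral_comp_smul (volume : Measure E3)
    (fun z => psiE e (z + x - x) * φ (z + x)) e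
  simp only [add_sub_cancel_right, finrank_euclideanSpace, Fintype.card_fin, psiE_smul he] at h2 ⊢
  rw [abs_of_pos (by positivity), smul_eq_mul] at h2
  simp only [mul_assoc, integral_const_mul] at h2
  have h3 := mul_left_cancel₀ (by positivity : (e ^ 3)⁻¹ ≠ 0) h2
  rw [← h3]
  simp only [add_comm]

lemma tendsto_psi (φ : 𝓢(E3, ℝ)) (x : E3) :
    Tendsto (fun e => ∫ w, psiE e (w - x) * φ w) (𝓝[>] 0) (𝓝 ((∫ y, psiE 1 y) * φ x)) := by
  obtain ⟨C, hC, h⟩ := schwartz_decay 0 φ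
  simp only [pow_zero, inv_one, mul_one] at h
  have : Tendsto (fun e : ℝ => ∫ y, psiE 1 y * φ (x + e • y)) (𝓝[>] 0)
      (𝓝 (∫ y, psiE 1 y * φ x)) := by
    refine tendsto_integral_filter_of_dominated_convergence
      (fun y => psiE 1 y * C) ?_ ?_ (integrable_psiE.mul_const C) ?_
    · refine Eventually.of_forall fun e => ?_
      exact ((psiE_nice one_pos).1.mul (φ.continuous.comp (by fun_prop))).aestronglyMeasurable
    · refine Eventually.of_forall fun e => Eventually.of_forall fun y => ?_
      rw [norm_mul, Real.norm_of_nonneg (psiE_nonneg _ _)]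
      exact mul_le_mul_of_nonneg_left (h _) (psiE_nonneg _ _)
    · refine Eventually.of_forall fun y => Tendsto.const_mul _ ?_
      have : ContinuousAt (fun e : ℝ => φ (x + e • y)) 0 :=
        (φ.continuous.comp (by fun_prop)).continuousAt
      have h2 := this.tendsto.mono_left (nhdsWithin_le_nhds (s := Set.Ioi 0))
      simpa using h2
  rw [integral_mul_const] at this
  refine this.congr' ?_
  filter_upwards [self_mem_nhdsWithin] with e he
  exact (psiE_scale he φ x).symm

/-- The weak formulation of `Σ_ij ∂_i ∂_j a_ij = -(∫ psiE 1) δ₀`, obtained from `drift_reg` by letting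
`e → 0` on both sides. -/
lemma drift_eq (g φ : 𝓢(E3, ℝ)) :
    ∑ i, ∑ j, ∫ w, Acv i j (pdS j g) w * pdS i φ w = (∫ y, psiE 1 y) * ∫ x, φ x * g x := by
  have h1 : Tendsto (fun e => ∑ i, ∑ j, ∫ w, cv (aE e i j) (pdS j g) w * pdS i φ w) (𝓝[>] 0)
      (𝓝 (∑ i, ∑ j, ∫ w, Acv i j (pdS j g) w * pdS i φ w)) :=
    tendsto_finsetSum _ fun i _ => tendsto_finsetSum _ fun j _ => tendsto_drift_left i j _ _
  obtain ⟨C, hC, h⟩ := schwartz_decay 0 φ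
  simp only [pow_zero, inv_one, mul_one] at h
  have h2 : Tendsto (fun e => ∫ x, (∫ w, psiE e (w - x) * φ w) * g x) (𝓝[>] 0)
      (𝓝 (∫ x, ((∫ y, psiE 1 y) * φ x) * g x)) := by
    refine tendsto_integral_filter_of_dominated_convergence
      (fun x => ((∫ y, psiE 1 y) * C) * |g x|) ?_ ?_ (g.integrable.abs.const_mul _) ?_
    · filter_upwards [self_mem_nhdsWithin] with e he
      have h := ((psiE_nice he).prod_integrable g φ).integral_prod_right.aestronglyMeasurable
      refine h.congr (Eventually.of_forall fun x => ?_)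
      simp only
      rw [← integral_mul_const]
      congr 1; ext w; ring
    · filter_upwards [self_mem_nhdsWithin] with e he
      refine Eventually.of_forall fun x => ?_
      rw [norm_mul, Real.norm_eq_abs (g x)]
      refine mul_le_mul_of_nonneg_right ?_ (abs_nonneg _)
      rw [psiE_scale he, ← integral_mul_const]
      refine norm_integral_le_of_norm_le (integrable_psiE.mul_const C)
        (Eventually.of_forall fun y => ?_)
      rw [norm_mul, Real.norm_of_nonneg (psiE_nonneg _ _)]
      exact mul_le_mul_of_nonneg_left (h _) (psiE_nonneg _ _)
    · exact Eventually.of_forall fun x => (tendsto_psi φ x).mul_const _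
  simp only [mul_assoc, integral_const_mul] at h2
  refine tendsto_nhds_unique h1 (h2.congr' ?_)
  filter_upwards [self_mem_nhdsWithin] with e he
  exact (drift_reg he g φ).symm

/-- The square of a Schwartz function. -/
noncomputable def sqS (h : 𝓢(E3, ℝ)) : 𝓢(E3, ℝ) :=
  SchwartzMap.pairing (ContinuousLinearMap.mul ℝ ℝ) h h

lemma sqS_apply (h : 𝓢(E3, ℝ)) (x : E3) : sqS h x = h x * h x := by
  simp [sqS]

lemma pdS_sqS (i : Fin 3) (h : 𝓢(E3, ℝ)) (x : E3) : pdS i (sqS h) x = 2 * (h x * pdS i h x) := by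
  have e : ⇑(sqS h) = ⇑h * ⇑h := by ext x; simp [sqS_apply]
  have hd := (h.differentiable x).hasFDerivAt
  rw [pdS_coe, pdS_coe, pd, pd, e, (hd.mul hd).fderiv]
  simp
  ring

/-- The drift term of `⟨Q(g,h),h⟩` is a multiple of `∫ g h²`, since
`∂_i ∂_j a_ij` is a negative multiple of the Dirac mass. -/
lemma pairL_eq' (g h : 𝓢(E3, ℝ)) : pairL (landauQ g h) h =
    - (∫ w, ∑ i, ∑ j, Acv i j g w * (pdS j h w * pdS i h w))
      + (∫ y, psiE 1 y) / 2 * ∫ x, g x * h x ^ 2 := by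
  rw [pairL_eq]
  congr 1
  have := drift_eq g (sqS h)
  simp only [pdS_sqS, sqS_apply] at this
  have e : ∀ i j w, Acv i j (pdS j g) w * (2 * (h w * pdS i h w))
      = 2 * (Acv i j (pdS j g) w * (h w * pdS i h w)) := fun i j w => by ring
  simp only [e, integral_const_mul, ← Finset.mul_sum] at this
  have e2 : ∀ x, g x * h x ^ 2 = h x * h x * g x := fun x => by ring
  simp only [e2]
  linarith

end

/-! ### Lower bound for the diffusion matrix -/

section
open Filter Topology SchwartzMap Metric
open scoped RealInnerProductSpace

lemma jap_pos (v : E3) : 0 < jap v := Real.sqrt_pos.2 (by positivity)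

lemma jap_sq (v : E3) : jap v ^ 2 = 1 + ‖v‖ ^ 2 := Real.sq_sqrt (by positivity)

lemma one_le_jap (v : E3) : 1 ≤ jap v := by
  rw [jap, Real.one_le_sqrt]; nlinarith [sq_nonneg ‖v‖]

lemma norm_le_jap (v : E3) : ‖v‖ ≤ jap v := Real.le_sqrt_of_sq_le (by linarith)

lemma jap_le (v : E3) : jap v ≤ 1 + ‖v‖ := by
  rw [jap, Real.sqrt_le_left (by positivity)]
  nlinarith [norm_nonneg v]

lemma continuous_jap : Continuous jap := by
  unfold jap; fun_prop

lemma integrable_poly_mul (k : ℕ) (f : 𝓢(E3, ℝ)) {p : E3 → ℝ} (hp : Continuous p) {C : ℝ}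
    (hb : ∀ x, |p x| ≤ C * (1 + ‖x‖) ^ k) : Integrable fun x => p x * f x := by
  obtain ⟨D, hD, h⟩ := schwartz_decay (k + 4) f
  refine Integrable.mono' (integrable_inv_one_add_norm.const_mul (C * D))
    (hp.mul f.continuous).aestronglyMeasurable (Eventually.of_forall fun x => ?_)
  rw [norm_mul, Real.norm_eq_abs (p x)]
  refine (mul_le_mul (hb x) (h x) (norm_nonneg _) ((abs_nonneg _).trans (hb x))).trans_eq ?_
  have : (1 + ‖x‖) ≠ 0 := by positivity
  rw [pow_add]
  field_simp

lemma integrable_jap_mul (k : ℕ) (f : 𝓢(E3, ℝ)) : Integrable fun x => jap x ^ k * f x := by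
  refine integrable_poly_mul k f (C := 1) (continuous_jap.pow k) fun x => ?_
  rw [abs_of_nonneg (by have := jap_pos x; positivity), one_mul]
  exact pow_le_pow_left₀ (jap_pos x).le (jap_le x) k

/-- A slab of half-width `η` inside the ball of radius `R` is contained in a rotated box. -/
lemma slab_volume (B : OrthonormalBasis (Fin 3) ℝ E3) (R η c : ℝ) (hR : 0 ≤ R) (hη : 0 ≤ η) :
    volume {x : E3 | ‖x‖ ≤ R ∧ |c - ⟪B 1, x⟫| ≤ η} ≤ ENNReal.ofReal (2 * η * (2 * R) ^ 2) := by
  have hpre : {x : E3 | ‖x‖ ≤ R ∧ |c - ⟪B 1, x⟫| ≤ η} ⊆ B.repr ⁻¹' (WithLp.ofLp ⁻¹'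
      (Set.Icc ![-R, c - η, -R] ![R, c + η, R])) := by
    rintro x ⟨h1, h2⟩
    have h3 : ∀ i, |B.repr x i| ≤ R := fun i => by
      refine (abs_coord_le _ _).trans ?_
      simpa using h1
    simp only [abs_le] at h3 h2
    have h4 : B.repr x 1 = ⟪B 1, x⟫ := B.repr_apply_apply x 1
    rw [Set.mem_preimage, Set.mem_preimage, Set.mem_Icc, Pi.le_def, Pi.le_def, Fin.forall_fin_succ,
      Fin.forall_fin_two, Fin.forall_fin_succ, Fin.forall_fin_two]
    simp only [Matrix.cons_val_zero, Matrix.cons_val_succ, Matrix.cons_val_one, Fin.succ_zero_eq_one]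
    refine ⟨⟨(h3 0).1, ?_, (h3 2).1⟩, (h3 0).2, ?_, (h3 2).2⟩
    · simp only [h4]; linarith [h2.2]
    · simp only [h4]; linarith [h2.1]
  refine (measure_mono hpre).trans ?_
  rw [B.measurePreserving_repr.measure_preimage
      ((PiLp.volume_preserving_ofLp (Fin 3)).measurable measurableSet_Icc).nullMeasurableSet,
    (PiLp.volume_preserving_ofLp (Fin 3)).measure_preimage measurableSet_Icc.nullMeasurableSet,
    Real.volume_Icc_pi, Fin.prod_univ_three, ← ENNReal.ofReal_mul (by simp; linarith),
    ← ENNReal.ofReal_mul (by simp; nlinarith)]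
  refine ENNReal.ofReal_le_ofReal (le_of_eq ?_)
  simp
  ring

/-- The quadratic form of the kernel. -/
lemma aK_quad (z ξ : E3) : ∑ i, ∑ j, aK z i j * (ξ j * ξ i)
    = ‖z‖⁻¹ * (‖ξ‖ ^ 2 - ⟪ξ, z⟫ ^ 2 / ‖z‖ ^ 2) := by
  have h1 : ‖ξ‖ ^ 2 = ξ 0 ^ 2 + ξ 1 ^ 2 + ξ 2 ^ 2 := by
    rw [EuclideanSpace.norm_sq_eq]
    simp [Fin.sum_univ_three]
  have h2 : ⟪ξ, z⟫ = ξ 0 * z 0 + ξ 1 * z 1 + ξ 2 * z 2 := by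
    simp [PiLp.inner_apply, Fin.sum_univ_three, mul_comm]
  simp only [aK_eq, h1, h2, Fin.sum_univ_three]
  simp
  ring

lemma aK_quad_nonneg (z ξ : E3) : 0 ≤ ∑ i, ∑ j, aK z i j * (ξ j * ξ i) := by
  rw [aK_quad]
  refine mul_nonneg (by positivity) (sub_nonneg.2 ?_)
  rcases eq_or_ne z 0 with rfl | hz
  · simp
  have : 0 < ‖z‖ := norm_pos_iff.2 hz
  rw [div_le_iff₀ (by positivity), ← mul_pow]
  exact sq_le_sq' (by linarith [neg_le_of_abs_le (abs_real_inner_le_norm ξ z)])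
    (real_inner_le_norm ξ z)

/-- Off the slab `|b·z| ≤ η` with `b ⊥ ξ`, the quadratic form of the kernel is bounded below: the
component of `z` orthogonal to `ξ` is at least `|b·z|` long. -/
lemma aK_quad_lower (z ξ b : E3) (hb : ‖b‖ = 1) (hξ : ⟪ξ, b⟫ = 0) {η r : ℝ} (hη : 0 < η)
    (h1 : η < |⟪b, z⟫|) (h2 : ‖z‖ ≤ r) :
    η ^ 2 * (r ^ 3)⁻¹ * ‖ξ‖ ^ 2 ≤ ∑ i, ∑ j, aK z i j * (ξ j * ξ i) := by
  rw [aK_quad]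
  have hz : 0 < ‖z‖ := by
    rw [norm_pos_iff]
    rintro rfl
    simp at h1
    linarith
  rcases eq_or_ne ξ 0 with rfl | hξ0
  · simp
  have hξp : 0 < ‖ξ‖ := norm_pos_iff.2 hξ0
  have h3 : ‖ξ‖ ^ 2 * ⟪b, z⟫ ^ 2 ≤ ‖ξ‖ ^ 2 * ‖z‖ ^ 2 - ⟪ξ, z⟫ ^ 2 := by
    have h4 : ⟪b, ‖ξ‖ ^ 2 • z - ⟪ξ, z⟫ • ξ⟫ = ‖ξ‖ ^ 2 * ⟪b, z⟫ := by
      rw [inner_sub_right, inner_smul_right, inner_smul_right, real_inner_comm ξ b, hξ]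
      ring
    have h5 : ‖‖ξ‖ ^ 2 • z - ⟪ξ, z⟫ • ξ‖ ^ 2 = ‖ξ‖ ^ 2 * (‖ξ‖ ^ 2 * ‖z‖ ^ 2 - ⟪ξ, z⟫ ^ 2) := by
      rw [norm_sub_sq_real, norm_smul, norm_smul, inner_smul_left, inner_smul_right,
        real_inner_comm ξ z]
      simp only [mul_pow, norm_pow, Real.norm_eq_abs, sq_abs, conj_trivial]
      rw [real_inner_comm z ξ]
      ring
    have h6 := abs_real_inner_le_norm b (‖ξ‖ ^ 2 • z - ⟪ξ, z⟫ • ξ)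
    rw [hb, one_mul, h4] at h6
    have h7 := sq_le_sq' (by linarith [neg_le_of_abs_le h6]) (le_of_abs_le h6)
    rw [h5] at h7
    have : 0 < ‖ξ‖ ^ 2 := by positivity
    nlinarith
  have h8 : η ^ 2 ≤ ⟪b, z⟫ ^ 2 := by
    rw [← sq_abs ⟪b, z⟫]
    exact pow_le_pow_left₀ hη.le h1.le 2
  have hr : 0 < r := hz.trans_le h2
  have h9 : (r ^ 3)⁻¹ ≤ (‖z‖ ^ 3)⁻¹ := by gcongr
  calc η ^ 2 * (r ^ 3)⁻¹ * ‖ξ‖ ^ 2 ≤ ⟪b, z⟫ ^ 2 * (‖z‖ ^ 3)⁻¹ * ‖ξ‖ ^ 2 := by gcongr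
    _ = (‖z‖ ^ 3)⁻¹ * (‖ξ‖ ^ 2 * ⟪b, z⟫ ^ 2) := by ring
    _ ≤ (‖z‖ ^ 3)⁻¹ * (‖ξ‖ ^ 2 * ‖z‖ ^ 2 - ⟪ξ, z⟫ ^ 2) := by gcongr
    _ = _ := by field_simp

lemma exists_basis (ξ : E3) (hξ : ξ ≠ 0) :
    ∃ B : OrthonormalBasis (Fin 3) ℝ E3, ⟪ξ, B 1⟫ = 0 := by
  have hn : ‖(‖ξ‖⁻¹ • ξ)‖ = 1 := by
    rw [norm_smul, norm_inv, norm_norm, inv_mul_cancel₀ (norm_ne_zero_iff.2 hξ)]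
  have ho : Orthonormal ℝ (Set.domRestrict ({0} : Set (Fin 3)) fun _ => ‖ξ‖⁻¹ • ξ) := by
    refine ⟨fun i => hn, ?_⟩
    rintro ⟨i, hi⟩ ⟨j, hj⟩ hij
    simp only [Set.mem_singleton_iff] at hi hj
    subst hi; subst hj
    exact absurd rfl hij
  obtain ⟨B, hB⟩ := ho.exists_orthonormalBasis_extension_of_card_eq (by simp)
  refine ⟨B, ?_⟩
  have h0 := hB 0 rfl
  have h1 : ⟪B 0, B 1⟫ = 0 := B.orthonormal.2 (by decide)
  rw [h0, inner_smul_left] at h1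
  simpa [hξ] using h1

lemma log_integrable (g : 𝓢(E3, ℝ)) (hg : ∀ v, 0 ≤ g v) :
    Integrable fun v => g v * Real.log (1 + g v) := by
  have hc : Continuous fun v => g v * Real.log (1 + g v) := by
    refine g.continuous.mul (Continuous.log (continuous_const.add g.continuous) fun x => ?_)
    have := hg x; positivity
  refine Integrable.mono' (schwartz_mul_integrable g g) hc.aestronglyMeasurable
    (Eventually.of_forall fun x => ?_)
  have h0 := hg x
  have h1 : 0 ≤ Real.log (1 + g x) := Real.log_nonneg (by linarith)
  rw [Real.norm_of_nonneg (mul_nonneg h0 h1)]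
  refine mul_le_mul_of_nonneg_left ?_ h0
  have := Real.log_le_sub_one_of_pos (by linarith : 0 < 1 + g x)
  linarith

/-- A lower bound for the diffusion matrix: the mass of `g` in a ball away from a thin slab
is bounded below, because a density with bounded entropy cannot concentrate on a thin slab. -/
lemma coercive (δ lam : ℝ) (hδ : 0 < δ) (hlam : 0 < lam) : ∃ K > 0, ∀ g : 𝓢(E3, ℝ),
    (∀ v, 0 ≤ g v) → δ < ∫ v, g v → ∫ v, jap v ^ 2 * g v ≤ lam →
    ∫ v, g v * Real.log (1 + g v) ≤ lam → ∀ w ξ : E3,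
    K * (jap w ^ 3)⁻¹ * ‖ξ‖ ^ 2 ≤ ∑ i, ∑ j, Acv i j g w * (ξ j * ξ i) := by
  -- The constants make the mass outside the ball of radius `R` at most `δ/4`, the mass where
  -- `g > M` at most `δ/8`, and the mass of `min g M` on the slab of half-width `η` at most `δ/8`.
  set R : ℝ := √(4 * lam / δ) with hRdef
  have hR : 0 < R := Real.sqrt_pos.2 (by positivity)
  have hR2 : R ^ 2 = 4 * lam / δ := Real.sq_sqrt (by positivity)
  set M : ℝ := Real.exp (8 * lam / δ) - 1 with hMdef
  have hL : 0 < 8 * lam / δ := by positivity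
  have hM : 0 < M := by
    have := Real.add_one_lt_exp hL.ne'
    linarith
  set η : ℝ := δ / (64 * M * R ^ 2) with hηdef
  have hη : 0 < η := by positivity
  refine ⟨δ / 2 * (η ^ 2 * ((1 + R) ^ 3)⁻¹), by positivity, fun g hg hmass hmom hent w ξ => ?_⟩
  rcases eq_or_ne ξ 0 with rfl | hξ
  · simp
  obtain ⟨B, hB⟩ := exists_basis ξ hξ
  set c := ⟪B 1, w⟫ with hc
  set S : Set E3 := {x : E3 | ‖x‖ ≤ R ∧ |c - ⟪B 1, x⟫| ≤ η} with hS
  set G : Set E3 := {x : E3 | ‖x‖ ≤ R ∧ η < |c - ⟪B 1, x⟫|} with hG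
  have hm1 : MeasurableSet {x : E3 | ‖x‖ ≤ R} := measurableSet_le (by fun_prop) (by fun_prop)
  have hSm : MeasurableSet S := hm1.inter (s₂ := {x : E3 | |c - ⟪B 1, x⟫| ≤ η})
    (measurableSet_le (by fun_prop) (by fun_prop))
  have hGm : MeasurableSet G := hm1.inter (s₂ := {x : E3 | η < |c - ⟪B 1, x⟫|})
    (measurableSet_lt (by fun_prop) (by fun_prop))
  have hvol := slab_volume B R η c hR.le hη.le
  have hSfin : volume S < ⊤ := hvol.trans_lt ENNReal.ofReal_lt_top
  have hSreal : volume.real S ≤ 2 * η * (2 * R) ^ 2 :=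
    ENNReal.toReal_le_of_le_ofReal (by positivity) hvol
  have hpt : ∀ x, g x ≤ G.indicator g x + S.indicator (fun _ => M) x
      + (8 * lam / δ)⁻¹ * (g x * Real.log (1 + g x)) + (R ^ 2)⁻¹ * (jap x ^ 2 * g x) := by
    intro x
    have h0 := hg x
    have hlog : 0 ≤ Real.log (1 + g x) := Real.log_nonneg (by linarith)
    have t1 : 0 ≤ G.indicator g x := Set.indicator_nonneg (fun x _ => hg x) x
    have t2 : 0 ≤ S.indicator (fun _ => M) x := Set.indicator_nonneg (fun x _ => hM.le) x
    have t3 : 0 ≤ (8 * lam / δ)⁻¹ * (g x * Real.log (1 + g x)) := by positivity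
    have t4 : 0 ≤ (R ^ 2)⁻¹ * (jap x ^ 2 * g x) := by positivity
    by_cases hx : ‖x‖ ≤ R
    · by_cases hxs : |c - ⟪B 1, x⟫| ≤ η
      · have : x ∈ S := ⟨hx, hxs⟩
        have e : S.indicator (fun _ => M) x = M := Set.indicator_of_mem this _
        by_cases hgM : g x ≤ M
        · linarith
        · have : 8 * lam / δ ≤ Real.log (1 + g x) := by
            rw [Real.le_log_iff_exp_le (by linarith)]
            linarith
          have : g x ≤ (8 * lam / δ)⁻¹ * (g x * Real.log (1 + g x)) := by
            rw [inv_mul_eq_div, le_div_iff₀ hL]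
            exact mul_le_mul_of_nonneg_left this h0
          linarith
      · have : x ∈ G := ⟨hx, not_le.1 hxs⟩
        have e : G.indicator g x = g x := Set.indicator_of_mem this _
        linarith
    · have : g x ≤ (R ^ 2)⁻¹ * (jap x ^ 2 * g x) := by
        rw [inv_mul_eq_div, le_div_iff₀ (by positivity), jap_sq, mul_comm]
        refine mul_le_mul_of_nonneg_right ?_ h0
        nlinarith
      linarith
  have i1 : Integrable (G.indicator g) := g.integrable.indicator hGm
  have i2 : Integrable (S.indicator fun _ => M) :=
    (integrable_indicator_iff hSm).2 (integrableOn_const hSfin.ne)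
  have i3 := (log_integrable g hg).const_mul (8 * lam / δ)⁻¹
  have i4 := (integrable_jap_mul 2 g).const_mul (R ^ 2)⁻¹
  have hmassG : δ / 2 ≤ ∫ x, G.indicator g x := by
    have h := integral_mono g.integrable (((i1.add i2).add i3).add i4) hpt
    simp only [Pi.add_apply] at h
    rw [integral_add (by exact (i1.add i2).add i3) i4, integral_add (by exact i1.add i2) i3,
      integral_add i1 i2, integral_const_mul, integral_const_mul, integral_indicator_const _ hSm,
      smul_eq_mul] at h
    have b1 : volume.real S * M ≤ δ / 8 := by
      calc volume.real S * M ≤ (2 * η * (2 * R) ^ 2) * M := by gcongr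
        _ = δ / 8 := by rw [hηdef]; field_simp; norm_num
    have b2 : (8 * lam / δ)⁻¹ * ∫ x, g x * Real.log (1 + g x) ≤ δ / 8 := by
      calc _ ≤ (8 * lam / δ)⁻¹ * lam := by gcongr
        _ = δ / 8 := by field_simp
    have b3 : (R ^ 2)⁻¹ * ∫ x, jap x ^ 2 * g x ≤ δ / 4 := by
      calc _ ≤ (R ^ 2)⁻¹ * lam := by gcongr
        _ = δ / 4 := by rw [hR2]; field_simp
    linarith
  have hI : ∀ i j, Integrable fun x => aK (w - x) i j * g x := fun i j =>
    cv_integrable (measurable_aK i j) (abs_aK_le i j) g w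
  have hI' : Integrable fun x => (∑ i, ∑ j, aK (w - x) i j * (ξ j * ξ i)) * g x := by
    simp only [Finset.sum_mul]
    refine integrable_finsetSum _ fun i _ => integrable_finsetSum _ fun j _ => ?_
    refine ((hI i j).const_mul (ξ j * ξ i)).congr (Eventually.of_forall fun x => ?_)
    simp only
    ring
  have hsum : ∑ i, ∑ j, Acv i j g w * (ξ j * ξ i)
      = ∫ x, (∑ i, ∑ j, aK (w - x) i j * (ξ j * ξ i)) * g x := by
    simp only [Finset.sum_mul]
    rw [integral_finsetSum]
    · refine Finset.sum_congr rfl fun i _ => ?_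
      rw [integral_finsetSum]
      · refine Finset.sum_congr rfl fun j _ => ?_
        rw [Acv, cv, ← integral_mul_const]
        congr 1; ext x; ring
      · intro j _
        refine ((hI i j).const_mul (ξ j * ξ i)).congr (Eventually.of_forall fun x => ?_)
        simp only
        ring
    · intro i _
      refine integrable_finsetSum _ fun j _ => ?_
      refine ((hI i j).const_mul (ξ j * ξ i)).congr (Eventually.of_forall fun x => ?_)
      simp only
      ring
  have hjp := jap_pos w
  set κ : ℝ := η ^ 2 * (((1 + R) * jap w) ^ 3)⁻¹ * ‖ξ‖ ^ 2 with hκ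
  have hκ0 : 0 ≤ κ := by positivity
  have hlow : ∀ x, κ * G.indicator g x ≤ (∑ i, ∑ j, aK (w - x) i j * (ξ j * ξ i)) * g x := by
    intro x
    by_cases hx : x ∈ G
    · rw [Set.indicator_of_mem hx]
      refine mul_le_mul_of_nonneg_right ?_ (hg x)
      refine aK_quad_lower (w - x) ξ (B 1) (B.orthonormal.1 1) hB hη ?_ ?_
      · rw [inner_sub_right]; exact hx.2
      · have h1 := norm_sub_le w x
        have h2 := norm_le_jap w
        have h3 := one_le_jap w
        have h4 := hx.1
        nlinarith
    · rw [Set.indicator_of_notMem hx, mul_zero]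
      exact mul_nonneg (aK_quad_nonneg _ _) (hg x)
  rw [hsum]
  calc δ / 2 * (η ^ 2 * ((1 + R) ^ 3)⁻¹) * (jap w ^ 3)⁻¹ * ‖ξ‖ ^ 2 = κ * (δ / 2) := by
        rw [hκ, mul_pow, mul_inv]; ring
    _ ≤ κ * ∫ x, G.indicator g x := by gcongr
    _ = ∫ x, κ * G.indicator g x := (integral_const_mul _ _).symm
    _ ≤ _ := integral_mono (i1.const_mul κ) hI' hlow

end

/-! ### A weighted Sobolev interpolation inequality -/

section
open Filter Topology SchwartzMap Metric
open scoped ContDiff NNReal ENNReal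

lemma cauchy_schwarz {f g : E3 → ℝ} (hf : Integrable fun x => f x ^ 2)
    (hg : Integrable fun x => g x ^ 2) (hfg : Integrable fun x => f x * g x) :
    (∫ x, f x * g x) ^ 2 ≤ (∫ x, f x ^ 2) * ∫ x, g x ^ 2 := by
  have h : ∀ t : ℝ, 0 ≤ (∫ x, f x ^ 2) * (t * t) + (2 * ∫ x, f x * g x) * t + ∫ x, g x ^ 2 := by
    intro t
    have h1 : 0 ≤ ∫ x, (t * t) * f x ^ 2 + (2 * t) * (f x * g x) + g x ^ 2 :=
      integral_nonneg fun x => by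
        simp only [Pi.zero_apply]
        nlinarith [sq_nonneg (t * f x + g x)]
    rw [integral_add (by exact (hf.const_mul _).add (hfg.const_mul _)) hg,
      integral_add (hf.const_mul _) (hfg.const_mul _), integral_const_mul, integral_const_mul] at h1
    linarith
  have := discrim_le_zero h
  rw [discrim] at this
  nlinarith

/-- The Sobolev embedding `Ḣ¹ ⊂ L⁶` in dimension three, with the powers cleared. -/
lemma gns : ∃ c : ℝ, 0 ≤ c ∧ ∀ u : E3 → ℝ, ContDiff ℝ 1 u → HasCompactSupport u →
    ∫ x, u x ^ 6 ≤ c * (∫ x, ‖fderiv ℝ u x‖ ^ 2) ^ 3 := by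
  set c : ℝ≥0 := eLpNormLESNormFDerivOfEqInnerConst (volume : Measure E3) (2 : ℝ≥0) with hcdef
  refine ⟨(c : ℝ) ^ 6, by positivity, fun u hu hc => ?_⟩
  have h := eLpNorm_le_eLpNorm_fderiv_of_eq_inner (volume : Measure E3) hu hc (p := 2) (p' := 6)
    (by norm_num) (by simp) (by simp; norm_num)
  have m1 : MemLp u (6 : ℝ≥0) volume := hu.continuous.memLp_of_hasCompactSupport hc
  have m2 : MemLp (fderiv ℝ u) (2 : ℝ≥0) volume :=
    (hu.continuous_fderiv one_ne_zero).memLp_of_hasCompactSupport (hc.fderiv ℝ)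
  rw [m1.eLpNorm_eq_integral_rpow_norm (by simp) (by simp),
    m2.eLpNorm_eq_integral_rpow_norm (by simp) (by simp), ← hcdef,
    ← ENNReal.ofReal_coe_nnreal (p := c), ← ENNReal.ofReal_mul (by positivity), ENNReal.ofReal_le_ofReal_iff (by positivity)] at h
  simp only [ENNReal.coe_toReal, NNReal.coe_ofNat] at h
  norm_cast at h
  have hA : 0 ≤ ∫ x, u x ^ 6 := integral_nonneg fun x => by
    have : 0 ≤ u x ^ 6 := by positivity
    exact this
  have hY : 0 ≤ ∫ x, ‖fderiv ℝ u x‖ ^ 2 := integral_nonneg fun x => by positivity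
  have e : ∀ x, ‖u x‖ ^ 6 = u x ^ 6 := fun x => by
    rw [Real.norm_eq_abs]; exact Even.pow_abs (by decide) _
  simp only [e] at h
  have h2 := pow_le_pow_left₀ (by positivity) h 6
  rw [mul_pow, ← Real.rpow_natCast _ 6, ← Real.rpow_mul hA] at h2
  rw [← Real.rpow_natCast (_ ^ _ : ℝ) 6, ← Real.rpow_mul hY] at h2
  norm_num at h2
  exact_mod_cast h2

lemma clm_norm_sq_le (L : E3 →L[ℝ] ℝ) : ‖L‖ ^ 2 ≤ ∑ i, (L (EuclideanSpace.single i 1)) ^ 2 := by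
  have hb : ‖L‖ ≤ √(∑ i, (L (EuclideanSpace.single i 1)) ^ 2) := by
    refine L.opNorm_le_bound (Real.sqrt_nonneg _) fun x => ?_
    have hx : L x = ∑ i, x i * L (EuclideanSpace.single i 1) := by
      conv_lhs => rw [← (EuclideanSpace.basisFun (Fin 3) ℝ).sum_repr x]
      simp
    rw [hx, EuclideanSpace.norm_eq, mul_comm, Real.norm_eq_abs]
    refine Real.abs_le_sqrt ?_ |>.trans_eq (Real.sqrt_mul (by positivity) _)
    simpa using Finset.sum_mul_sq_le_sq_mul_sq Finset.univ (fun i => x i)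
      fun i => L (EuclideanSpace.single i 1)
  calc ‖L‖ ^ 2 ≤ (√(∑ i, (L (EuclideanSpace.single i 1)) ^ 2)) ^ 2 := by gcongr
    _ = _ := Real.sq_sqrt (by positivity)

/-- The weight `⟨v⟩^{-3/2}`. -/
noncomputable def Wt (v : E3) : ℝ := (1 + ‖v‖ ^ 2) ^ (-(3 / 4) : ℝ)

lemma Wt_pos (v : E3) : 0 < Wt v := Real.rpow_pos_of_pos (by positivity) _

lemma Wt_sq (v : E3) : Wt v ^ 2 = (jap v ^ 3)⁻¹ := by
  have hp : 0 ≤ 1 + ‖v‖ ^ 2 := by positivity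
  rw [Wt, jap, Real.sqrt_eq_rpow, ← Real.rpow_mul_natCast hp, ← Real.rpow_mul_natCast hp,
    ← Real.rpow_neg hp]
  norm_num

lemma Wt_contDiff : ContDiff ℝ 1 Wt := by
  unfold Wt
  refine ContDiff.rpow_const_of_ne (contDiff_const.add (contDiff_norm_sq ℝ)) fun x => by positivity

lemma Wt_fderiv (v : E3) : ‖fderiv ℝ Wt v‖ ≤ 3 / 2 * Wt v := by
  have hp : 0 < 1 + ‖v‖ ^ 2 := by positivity
  have h1 : HasFDerivAt (fun v : E3 => 1 + ‖v‖ ^ 2) (2 • innerSL ℝ v) v :=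
    (hasStrictFDerivAt_norm_sq v).hasFDerivAt.const_add 1
  have h2 := h1.rpow_const (p := (-(3 / 4) : ℝ)) (Or.inl hp.ne')
  have h3 : HasFDerivAt Wt _ v := h2
  rw [h3.fderiv, norm_smul, ← Nat.cast_smul_eq_nsmul ℝ, norm_smul, innerSL_apply_norm]
  have e : (1 + ‖v‖ ^ 2) ^ (-(3 / 4) - 1 : ℝ) = Wt v * (1 + ‖v‖ ^ 2)⁻¹ := by
    rw [Real.rpow_sub hp, Real.rpow_one, Wt]; rfl
  rw [e, Real.norm_eq_abs, abs_mul, abs_mul, abs_of_pos (Wt_pos v), abs_of_pos (inv_pos.2 hp)]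
  have h4 : (1 + ‖v‖ ^ 2)⁻¹ * ‖v‖ ≤ 1 := by
    rw [inv_mul_le_iff₀ hp]
    nlinarith [sq_nonneg (‖v‖ - 1)]
  have : |(-(3 / 4) : ℝ)| = 3 / 4 := by norm_num [abs_of_neg]
  rw [this]
  norm_num
  nlinarith [Wt_pos v]

/-- Cut-offs with values in `[0, 1]` that converge to `1` and have uniformly bounded gradient. -/
lemma exists_cutoff : ∃ (χ : ℕ → E3 → ℝ) (D : ℝ), 0 ≤ D ∧ (∀ n, ContDiff ℝ 1 (χ n)) ∧
    (∀ n, HasCompactSupport (χ n)) ∧ (∀ n x, 0 ≤ χ n x ∧ χ n x ≤ 1) ∧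
    (∀ n x, ‖fderiv ℝ (χ n) x‖ ≤ D) ∧ ∀ x, Tendsto (fun n => χ n x) atTop (𝓝 1) := by
  let b : ContDiffBump (0 : E3) := ⟨1, 2, one_pos, one_lt_two⟩
  have hb : ContDiff ℝ 1 b := b.contDiff
  obtain ⟨D, hD⟩ := (hb.continuous_fderiv one_ne_zero).bounded_above_of_compact_support
    (b.hasCompactSupport.fderiv ℝ)
  have hD0 : 0 ≤ D := (norm_nonneg _).trans (hD 0)
  have hn : ∀ n : ℕ, ((n : ℝ) + 1)⁻¹ ≠ 0 := fun n => by positivity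
  refine ⟨fun n x => b (((n : ℝ) + 1)⁻¹ • x), D, hD0, fun n => ?_, fun n => ?_, fun n x => ?_,
    fun n x => ?_, fun x => ?_⟩
  · exact hb.comp (contDiff_const_smul _)
  · exact b.hasCompactSupport.comp_smul (hn n)
  · exact ⟨b.nonneg, b.le_one⟩
  · have h1 := ((hb.differentiable one_ne_zero (((n : ℝ) + 1)⁻¹ • x)).hasFDerivAt).comp x
      ((hasFDerivAt_id x).const_smul ((n : ℝ) + 1)⁻¹)
    have h2 : HasFDerivAt (fun x => b (((n : ℝ) + 1)⁻¹ • x)) _ x := h1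
    rw [h2.fderiv, ContinuousLinearMap.comp_smul, ContinuousLinearMap.comp_id, norm_smul,
      Real.norm_of_nonneg (by positivity)]
    have h3 : ((n : ℝ) + 1)⁻¹ ≤ 1 := inv_le_one_of_one_le₀ (by simp)
    calc _ ≤ 1 * D := mul_le_mul h3 (hD _) (norm_nonneg _) zero_le_one
      _ = D := one_mul D
  · refine tendsto_const_nhds.congr' ?_
    filter_upwards [eventually_ge_atTop ⌈‖x‖⌉₊] with n hn
    have h1 : ‖x‖ ≤ n := (Nat.le_ceil _).trans (by exact_mod_cast hn)
    refine (b.one_of_mem_closedBall ?_).symm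
    rw [mem_closedBall_zero_iff, norm_smul, norm_inv, Real.norm_of_nonneg (by positivity),
      inv_mul_le_iff₀ (by positivity)]
    change ‖x‖ ≤ ((n : ℝ) + 1) * 1
    linarith

/-- The Young inequality with exponents `4` and `4/3`, stated for fourth powers to avoid roots. -/
lemma young_four {T Y P ε : ℝ} (hY : 0 ≤ Y) (hP : 0 ≤ P) (hε : 0 < ε) (h : T ^ 4 ≤ P * Y ^ 3) :
    T ≤ ε * Y + P / ε ^ 3 := by
  by_cases hT : T ≤ ε * Y
  · have : 0 ≤ P / ε ^ 3 := by positivity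
    linarith
  · push Not at hT
    have hTp : 0 < T := lt_of_le_of_lt (by positivity) hT
    have h1 : (ε * Y) ^ 3 ≤ T ^ 3 := by gcongr
    have h2 : T * ε ^ 3 ≤ P := by
      have h3 : (T * ε ^ 3) * T ^ 3 ≤ P * T ^ 3 := by
        calc (T * ε ^ 3) * T ^ 3 = ε ^ 3 * T ^ 4 := by ring
          _ ≤ ε ^ 3 * (P * Y ^ 3) := by gcongr
          _ = P * (ε * Y) ^ 3 := by ring
          _ ≤ _ := by gcongr
      exact le_of_mul_le_mul_right h3 (by positivity)
    have h4 : T ≤ P / ε ^ 3 := by rwa [le_div_iff₀ (by positivity)]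
    have : 0 ≤ ε * Y := by positivity
    linarith

lemma hcs_pow {u : E3 → ℝ} (hs : HasCompactSupport u) {k : ℕ} (hk : k ≠ 0) :
    HasCompactSupport fun x => u x ^ k := by
  refine hs.mono fun x hx => ?_
  rw [Function.mem_support] at hx ⊢
  intro h
  exact hx (by rw [h, zero_pow hk])

/-- Interpolation between `L²` and `L⁶` together with the Sobolev inequality. -/
lemma interp : ∃ c : ℝ, 0 ≤ c ∧ ∀ (u p : E3 → ℝ), ContDiff ℝ 1 u → HasCompactSupport u →
    Continuous p → (Integrable fun x => p x ^ 2) → ∀ ε > 0,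
    ∫ x, p x * u x ^ 2 ≤ ε * (∫ x, ‖fderiv ℝ u x‖ ^ 2)
      + c * (ε ^ 3)⁻¹ * (∫ x, p x ^ 2) ^ 2 * ∫ x, u x ^ 2 := by
  obtain ⟨c, hc, hg⟩ := gns
  refine ⟨c, hc, fun u p hu hs hp hp2 ε hε => ?_⟩
  have hI : ∀ k, k ≠ 0 → Integrable fun x => u x ^ k := fun k hk =>
    (hu.continuous.pow k).integrable_of_hasCompactSupport
      (hcs_pow hs hk)
  have hpu : Integrable fun x => p x * u x ^ 2 :=
    (hp.mul (hu.continuous.pow 2)).integrable_of_hasCompactSupport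
      ((hcs_pow hs two_ne_zero).mul_left)
  set T := ∫ x, p x * u x ^ 2
  set Y := ∫ x, ‖fderiv ℝ u x‖ ^ 2
  set P2 := ∫ x, p x ^ 2
  set X := ∫ x, u x ^ 2
  have hY : 0 ≤ Y := integral_nonneg fun x => by positivity
  have hX : 0 ≤ X := integral_nonneg fun x => sq_nonneg _
  have hP2 : 0 ≤ P2 := integral_nonneg fun x => sq_nonneg _
  have c1 : T ^ 2 ≤ P2 * ∫ x, u x ^ 4 := by
    have := cauchy_schwarz (f := p) (g := fun x => u x ^ 2) hp2
      ((hI 4 (by norm_num)).congr (Eventually.of_forall fun x => by simp only; ring)) hpu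
    simpa [← pow_mul] using this
  have c2 : (∫ x, u x ^ 4) ^ 2 ≤ X * ∫ x, u x ^ 6 := by
    have := cauchy_schwarz (f := u) (g := fun x => u x ^ 3) (hI 2 (by norm_num))
      ((hI 6 (by norm_num)).congr (Eventually.of_forall fun x => by simp only; ring))
      ((hI 4 (by norm_num)).congr (Eventually.of_forall fun x => by simp only; ring))
    simpa [← pow_mul, ← pow_succ'] using this
  have c3 := hg u hu hs
  have hF4 : 0 ≤ ∫ x, u x ^ 4 := integral_nonneg fun x => by
    have : 0 ≤ u x ^ 4 := by positivity
    exact this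
  have c4 : T ^ 4 ≤ (c * P2 ^ 2 * X) * Y ^ 3 := by
    calc T ^ 4 = (T ^ 2) ^ 2 := by ring
      _ ≤ (P2 * ∫ x, u x ^ 4) ^ 2 := by gcongr
      _ = P2 ^ 2 * (∫ x, u x ^ 4) ^ 2 := by ring
      _ ≤ P2 ^ 2 * (X * (c * Y ^ 3)) := by gcongr; exact c2.trans (by gcongr)
      _ = _ := by ring
  have hP : 0 ≤ c * P2 ^ 2 * X := by positivity
  have e : c * (ε ^ 3)⁻¹ * P2 ^ 2 * X = (c * P2 ^ 2 * X) / ε ^ 3 := by field_simp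
  rw [e]
  exact young_four hY hP hε c4

lemma nice_weight : Nice fun x => (jap x ^ 3)⁻¹ := by
  refine ⟨(continuous_jap.pow 3).inv₀ fun x => (pow_pos (jap_pos x) 3).ne', 1, fun x => ?_⟩
  rw [abs_of_pos (inv_pos.2 (pow_pos (jap_pos x) 3))]
  exact inv_le_one_of_one_le₀ (one_le_pow₀ (one_le_jap x))

lemma weight_integrable (f : 𝓢(E3, ℝ)) : Integrable fun x => (jap x ^ 3)⁻¹ * f x ^ 2 := by
  simp only [sq]
  exact nice_weight.mul_integrable (schwartz_mul_integrable f f) continuous_id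

lemma jap6_integrable (g : 𝓢(E3, ℝ)) : Integrable fun x => (jap x ^ 3 * g x) ^ 2 := by
  have := integrable_jap_mul 6 (sqS g)
  refine this.congr (Eventually.of_forall fun x => ?_)
  simp only [sqS_apply]
  ring

/-- Gradient of the truncated weighted function `χ ⟨v⟩^{-3/2} h`; the weight has a bounded logarithmic
derivative, so only `⟨v⟩^{-3/2} ∇h` and `⟨v⟩^{-3/2} h` enter. -/
lemma fderiv_cut_le {χ : E3 → ℝ} {D : ℝ} {x : E3} (χ1 : ContDiff ℝ 1 χ) (χ3 : 0 ≤ χ x ∧ χ x ≤ 1)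
    (χ4 : ‖fderiv ℝ χ x‖ ≤ D) (h : 𝓢(E3, ℝ)) :
    ‖fderiv ℝ (fun x => χ x * (Wt x * h x)) x‖ ^ 2 ≤ 2 * (∑ i, (jap x ^ 3)⁻¹ * pdS i h x ^ 2)
      + 2 * (3 / 2 + D) ^ 2 * ((jap x ^ 3)⁻¹ * h x ^ 2) := by
  have d1 := ((χ1).differentiable one_ne_zero x).hasFDerivAt
  have d2 := (Wt_contDiff.differentiable one_ne_zero x).hasFDerivAt
  have d3 := (h.differentiable x).hasFDerivAt
  have d4 : HasFDerivAt (fun x => χ x * (Wt x * h x)) _ x := d1.mul (d2.mul d3)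
  have hw := Wt_pos x
  have n1 : ‖fderiv ℝ (fun x => χ x * (Wt x * h x)) x‖ ≤ Wt x * (‖fderiv ℝ h x‖ + (3 / 2 + D) * |h x|) := by
    rw [d4.fderiv]
    refine (norm_add_le _ _).trans ?_
    have t1 : ‖χ x • (Wt x • fderiv ℝ h x + h x • fderiv ℝ Wt x)‖
        ≤ Wt x * ‖fderiv ℝ h x‖ + |h x| * (3 / 2 * Wt x) := by
      rw [norm_smul, Real.norm_of_nonneg (χ3).1]
      refine (mul_le_of_le_one_left (norm_nonneg _) (χ3).2).trans ?_
      refine (norm_add_le _ _).trans ?_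
      rw [norm_smul, norm_smul, Real.norm_of_nonneg hw.le, Real.norm_eq_abs]
      have := Wt_fderiv x
      gcongr
    have t2 : ‖(Wt x * h x) • fderiv ℝ χ x‖ ≤ Wt x * |h x| * D := by
      rw [norm_smul, norm_mul, Real.norm_of_nonneg hw.le, Real.norm_eq_abs]
      have := χ4
      gcongr
    refine (add_le_add t1 t2).trans_eq ?_
    ring
  have n2 := clm_norm_sq_le (fderiv ℝ h x)
  have n3 : ∀ i, fderiv ℝ h x (EuclideanSpace.single i 1) = pdS i h x := fun i => by
    rw [pdS_coe]; rfl
  simp only [n3] at n2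
  calc ‖fderiv ℝ (fun x => χ x * (Wt x * h x)) x‖ ^ 2 ≤ (Wt x * (‖fderiv ℝ h x‖ + (3 / 2 + D) * |h x|)) ^ 2 := by gcongr
    _ = Wt x ^ 2 * (‖fderiv ℝ h x‖ + (3 / 2 + D) * |h x|) ^ 2 := by ring
    _ ≤ Wt x ^ 2 * (2 * ‖fderiv ℝ h x‖ ^ 2 + 2 * ((3 / 2 + D) ^ 2 * h x ^ 2)) := by
      gcongr
      rw [← sq_abs (h x)]
      nlinarith [sq_nonneg (‖fderiv ℝ h x‖ - (3 / 2 + D) * |h x|)]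
    _ ≤ Wt x ^ 2 * (2 * (∑ i, pdS i h x ^ 2) + 2 * ((3 / 2 + D) ^ 2 * h x ^ 2)) := by gcongr
    _ = _ := by
      rw [← Finset.mul_sum, Wt_sq]; ring

/-- The drift term is controlled by an arbitrarily small part of the weighted gradient norm. The
inequality `interp` is applied to `χ_n ⟨v⟩^{-3/2} h`, and `n → ∞`. -/
lemma sobolev : ∃ C : ℝ, 0 ≤ C ∧ ∀ (g h : 𝓢(E3, ℝ)), ∀ ε > 0,
    ∫ x, g x * h x ^ 2 ≤ ε * (∑ i, ∫ x, (jap x ^ 3)⁻¹ * pdS i h x ^ 2)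
      + C * (ε + (ε ^ 3)⁻¹ * (∫ x, (jap x ^ 3 * g x) ^ 2) ^ 2)
        * ∫ x, (jap x ^ 3)⁻¹ * h x ^ 2 := by
  obtain ⟨χ, D, hD, χ1, χ2, χ3, χ4, χ5⟩ := exists_cutoff
  obtain ⟨c, hc, hint⟩ := interp
  refine ⟨(3 / 2 + D) ^ 2 + 8 * c, by positivity, fun g h ε hε => ?_⟩
  set X := ∫ x, (jap x ^ 3)⁻¹ * h x ^ 2
  set Z := ∑ i, ∫ x, (jap x ^ 3)⁻¹ * pdS i h x ^ 2
  set P2 := ∫ x, (jap x ^ 3 * g x) ^ 2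
  have hX : 0 ≤ X := integral_nonneg fun x => by have := jap_pos x; positivity
  have hP2 : 0 ≤ P2 := integral_nonneg fun x => sq_nonneg _
  have hh : ContDiff ℝ 1 h := h.smooth 1
  have hgh : Integrable fun x => g x * h x ^ 2 := by
    have := schwartz_mul_integrable g (sqS h)
    simpa only [sqS_apply, ← sq] using this
  have key : ∀ n, ∫ x, χ n x ^ 2 * (g x * h x ^ 2) ≤ ε * Z
      + ((3 / 2 + D) ^ 2 + 8 * c) * (ε + (ε ^ 3)⁻¹ * P2 ^ 2) * X := by
    intro n
    set u : E3 → ℝ := fun x => χ n x * (Wt x * h x) with hu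
    have hu1 : ContDiff ℝ 1 u := (χ1 n).mul (Wt_contDiff.mul hh)
    have hu2 : HasCompactSupport u := (χ2 n).mul_right
    have h1 := hint u (fun x => jap x ^ 3 * g x) hu1 hu2 ((continuous_jap.pow 3).mul g.continuous)
      (jap6_integrable g) (ε / 2) (by positivity)
    have e1 : ∀ x, jap x ^ 3 * g x * u x ^ 2 = χ n x ^ 2 * (g x * h x ^ 2) := by
      intro x
      have hj := (jap_pos x).ne'
      rw [hu]
      simp only [mul_pow, Wt_sq]
      field_simp
    simp only [e1] at h1
    have hu3 : Integrable fun x => u x ^ 2 :=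
      (hu1.continuous.pow 2).integrable_of_hasCompactSupport
        (hcs_pow hu2 two_ne_zero)
    have hXn : ∫ x, u x ^ 2 ≤ X := by
      refine integral_mono hu3 (weight_integrable h) fun x => ?_
      have hj := jap_pos x
      simp only [hu, mul_pow, Wt_sq]
      have : χ n x ^ 2 ≤ 1 := pow_le_one₀ (χ3 n x).1 (χ3 n x).2
      exact mul_le_of_le_one_left (by positivity) this
    have hder := fun x => fderiv_cut_le (χ1 n) (χ3 n x) (χ4 n x) h
    have hYn : ∫ x, ‖fderiv ℝ u x‖ ^ 2 ≤ 2 * Z + 2 * (3 / 2 + D) ^ 2 * X := by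
      have i1 : Integrable fun x => ∑ i, (jap x ^ 3)⁻¹ * pdS i h x ^ 2 :=
        integrable_finsetSum _ fun i _ => weight_integrable (pdS i h)
      have := integral_mono_of_nonneg (μ := (volume : Measure E3)) (Eventually.of_forall fun x => by positivity)
        ((i1.const_mul 2).add ((weight_integrable h).const_mul (2 * (3 / 2 + D) ^ 2)))
        (Eventually.of_forall hder)
      refine this.trans_eq ?_
      simp only [Pi.add_apply]
      rw [integral_add (i1.const_mul 2) ((weight_integrable h).const_mul _), integral_const_mul,
        integral_const_mul, integral_finsetSum _ fun i _ => weight_integrable (pdS i h)]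
    have hp0 : 0 ≤ c * ((ε / 2) ^ 3)⁻¹ * P2 ^ 2 := by positivity
    calc _ ≤ ε / 2 * (2 * Z + 2 * (3 / 2 + D) ^ 2 * X) + c * ((ε / 2) ^ 3)⁻¹ * P2 ^ 2 * X := by
          refine h1.trans ?_
          gcongr
      _ = ε * Z + ((3 / 2 + D) ^ 2 * ε * X + 8 * c * ((ε ^ 3)⁻¹ * P2 ^ 2) * X) := by
          rw [div_pow, inv_div]
          ring
      _ ≤ _ := by
          have : 0 ≤ (3 / 2 + D) ^ 2 * ((ε ^ 3)⁻¹ * P2 ^ 2) * X + 8 * c * ε * X := by positivity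
          nlinarith
  refine le_of_tendsto' (f := fun n => ∫ x, χ n x ^ 2 * (g x * h x ^ 2)) (x := atTop) ?_ key
  refine tendsto_integral_of_dominated_convergence (fun x => |g x * h x ^ 2|) (fun n => ?_)
    hgh.abs (fun n => Eventually.of_forall fun x => ?_) (Eventually.of_forall fun x => ?_)
  · exact (((χ1 n).continuous.pow 2).mul
      (g.continuous.mul (h.continuous.pow 2))).aestronglyMeasurable
  · rw [norm_mul, Real.norm_eq_abs (g x * h x ^ 2), norm_pow, Real.norm_of_nonneg (χ3 n x).1]
    exact mul_le_of_le_one_left (abs_nonneg _) (pow_le_one₀ (χ3 n x).1 (χ3 n x).2)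
  · simpa using ((χ5 x).pow 2).mul_const (g x * h x ^ 2)

end

/-! ### Weighted norms as integrals, and the coercivity estimate -/

section
open Filter Topology SchwartzMap Metric

lemma Lpl_one_zero (g : E3 → ℝ) (hg : ∀ v, 0 ≤ g v) : Lpl 1 0 g = ∫ v, g v := by
  simp [Lpl, abs_of_nonneg (hg _)]

lemma Lpl_one_two (g : E3 → ℝ) (hg : ∀ v, 0 ≤ g v) : Lpl 1 2 g = ∫ v, jap v ^ 2 * g v := by
  simp [Lpl, abs_of_nonneg (hg _), mul_comm]

lemma Lpl_two_sq (l : ℝ) (f : E3 → ℝ) :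
    Lpl 2 l f ^ 2 = ∫ v, jap v ^ (l * 2) * f v ^ 2 := by
  have h : 0 ≤ ∫ v : E3, |f v| ^ (2 : ℝ) * jap v ^ (l * 2) := integral_nonneg fun v => by
    have := (jap_pos v).le
    positivity
  rw [Lpl, ← Real.rpow_mul_natCast h]
  norm_num
  congr 1; ext v; ring

lemma Lpl_neg_sq (f : E3 → ℝ) :
    Lpl 2 (-(3 / 2)) f ^ 2 = ∫ v, (jap v ^ 3)⁻¹ * f v ^ 2 := by
  rw [Lpl_two_sq]
  congr 1; ext v
  rw [show (-(3 / 2) * 2 : ℝ) = -((3 : ℕ) : ℝ) by norm_num, Real.rpow_neg (jap_pos v).le,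
    Real.rpow_natCast]

lemma Lpl_three_four (f : E3 → ℝ) :
    Lpl 2 3 f ^ 4 = (∫ v, (jap v ^ 3 * f v) ^ 2) ^ 2 := by
  rw [show Lpl 2 3 f ^ 4 = (Lpl 2 3 f ^ 2) ^ 2 by ring, Lpl_two_sq]
  congr 2; ext v
  rw [show (3 * 2 : ℝ) = ((6 : ℕ) : ℝ) by norm_num, Real.rpow_natCast]
  ring

end

/-- unweighted coercivity estimate. For `δ, λ > 0` there exist
`K = K(δ,λ) > 0` and `C₂ = C₂(δ,λ) > 0` such that for every Schwartz `h` and every nonnegative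
Schwartz `g` with `‖g‖_{L¹} > δ` and `‖g‖_{L¹₂} + ∫ g log(1+g) < λ`:
`⟨Q(g,h), h⟩ ≤ −K ‖∇h‖²_{L²_{−3/2}} + C₂ (1+‖g‖⁴_{L²₃}) ‖h‖²_{L²_{−3/2}}`. -/
theorem landau_coercivity_unweighted (δ lam : ℝ) (hδ : 0 < δ) (hlam : 0 < lam) :
    ∃ K > 0, ∃ C₂ > 0, ∀ h g : SchwartzMap E3 ℝ,
      (∀ v, 0 ≤ g v) →
      δ < Lpl 1 0 (⇑g) →
      Lpl 1 2 (⇑g) + (∫ v : E3, g v * Real.log (1 + g v)) < lam →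
      pairL (landauQ (⇑g) (⇑h)) (⇑h)
        ≤ -K * (∑ i : Fin 3, (Lpl 2 (-(3 / 2)) (pd i (⇑h))) ^ 2)
          + C₂ * (1 + (Lpl 2 3 (⇑g)) ^ 4) * (Lpl 2 (-(3 / 2)) (⇑h)) ^ 2 := by
  obtain ⟨K, hK, hcoer⟩ := coercive δ lam hδ hlam
  obtain ⟨C, hC, hsob⟩ := sobolev
  obtain ⟨A, hA⟩ : ∃ A : ℝ, A = (∫ y, psiE 1 y) / 2 := ⟨_, rfl⟩
  have hA0 : 0 ≤ A := by
    rw [hA]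
    exact div_nonneg (integral_nonneg (psiE_nonneg 1)) (by norm_num)
  -- `ε` is such that `A * ε ≤ K / 2`, so that half of the diffusion absorbs the gradient term.
  obtain ⟨ε, hε⟩ : ∃ ε : ℝ, ε = K / (2 * (A + 1)) := ⟨_, rfl⟩
  have hε0 : 0 < ε := by rw [hε]; positivity
  have hAε : A * ε ≤ K / 2 := by
    rw [hε, ← mul_div_assoc, div_le_div_iff₀ (by positivity) (by norm_num)]
    nlinarith
  refine ⟨K / 2, by positivity, A * C * (ε + (ε ^ 3)⁻¹) + 1, by positivity,
    fun h g hg h1 h2 => ?_⟩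
  rw [Lpl_one_zero _ hg] at h1
  rw [Lpl_one_two _ hg] at h2
  have hm : 0 ≤ ∫ v, jap v ^ 2 * g v := integral_nonneg fun v => by
    have := hg v
    positivity
  have hl : 0 ≤ ∫ v, g v * Real.log (1 + g v) := integral_nonneg fun v =>
    mul_nonneg (hg v) (Real.log_nonneg (by linarith [hg v]))
  have hco := hcoer g hg h1 (by linarith) (by linarith)
  have hso := hsob g h ε hε0
  rw [pairL_eq', ← hA]
  simp only [Lpl_neg_sq, Lpl_three_four, ← pdS_coe]
  have hdiff : K * ∑ i, ∫ x, (jap x ^ 3)⁻¹ * pdS i h x ^ 2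
      ≤ ∫ w, ∑ i, ∑ j, Acv i j g w * (pdS j h w * pdS i h w) := by
    rw [← integral_finsetSum _ fun i _ => weight_integrable (pdS i h), ← integral_const_mul]
    refine integral_mono
      ((integrable_finsetSum _ fun i _ => weight_integrable (pdS i h)).const_mul K)
      (integrable_finsetSum _ fun i _ => integrable_finsetSum _ fun j _ =>
        Acv_mul_integrable i j g (schwartz_mul_integrable _ _)) fun w => ?_
    have h3 := hco w (WithLp.toLp 2 fun i => pdS i h w)
    rw [EuclideanSpace.norm_sq_eq] at h3
    simp only [Real.norm_eq_abs, sq_abs] at h3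
    simp only [← Finset.mul_sum]
    rw [← mul_assoc]
    simpa only [← Finset.mul_sum] using h3
  have hX : 0 ≤ ∫ x, (jap x ^ 3)⁻¹ * h x ^ 2 := integral_nonneg fun x => by
    have := jap_pos x
    positivity
  have hZ : 0 ≤ ∑ i, ∫ x, (jap x ^ 3)⁻¹ * pdS i h x ^ 2 :=
    Finset.sum_nonneg fun i _ => integral_nonneg fun x => by
      have := jap_pos x
      positivity
  -- What is left is algebra in the five integrals.
  generalize (∫ x, (jap x ^ 3)⁻¹ * h x ^ 2) = X at *
  generalize (∑ i, ∫ x, (jap x ^ 3)⁻¹ * pdS i h x ^ 2) = Z at *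
  generalize (∫ x, (jap x ^ 3 * g x) ^ 2) = P at *
  generalize (∫ w, ∑ i, ∑ j, Acv i j g w * (pdS j h w * pdS i h w)) = Dif at *
  generalize (∫ x, g x * h x ^ 2) = T at *
  have s1 : A * T ≤ A * (ε * Z + C * (ε + (ε ^ 3)⁻¹ * P ^ 2) * X) :=
    mul_le_mul_of_nonneg_left hso hA0
  have s2 : A * ε * Z ≤ K / 2 * Z := mul_le_mul_of_nonneg_right hAε hZ
  have hε3 : 0 < (ε ^ 3)⁻¹ := by positivity
  have s3 : 0 ≤ A * C * (ε * P ^ 2 + (ε ^ 3)⁻¹) * X + (1 + P ^ 2) * X := by positivity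
  nlinarith
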